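/- Let 𝔥 be a complex Hilbert space which is not of dimension two and let d be a bounded decoherence functional for 𝔥. Then d is tensor bounded if, and only if, there exists a trace class operator 𝔛 on the Hilbert space tensor product 𝔥 ⊗ 𝔥 such that d(p,q) = tr((p ⊗ q)𝔛) for all finite-rank projections p and q on 𝔥. -/

import Mathlib

/- Common background definitions: decoherence functionals on the projection
lattice of a complex Hilbert space, boundedness/additivity notions, trace class
operators, and an axiomatisation of the Hilbert space tensor product
`𝔥 ⊗ 𝔥` together with the operator tensor product. -/

noncomputable section

open scoped ComplexInnerProductSpace ComplexOrder
open ContinuousLinearMap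

universe u

variable {E : Type u} [NormedAddCommGroup E] [InnerProductSpace ℂ E] [CompleteSpace E]
variable {G : Type u} [NormedAddCommGroup G] [InnerProductSpace ℂ G] [CompleteSpace G]

/-- `p` is an orthogonal projection on a Hilbert space. -/
def IsOrthoProj (p : E →L[ℂ] E) : Prop :=
  IsIdempotentElem p ∧ IsSelfAdjoint p

/-- `p` is an operator of finite rank. -/
def HasFiniteRank (p : E →L[ℂ] E) : Prop :=
  FiniteDimensional ℂ ↥(LinearMap.range (p : E →ₗ[ℂ] E))

/-- A decoherence functional on the lattice of projections `P(𝔥)`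
(modelled as a function on all pairs of bounded operators whose defining
properties refer only to its values at pairs of orthogonal projections). -/
structure IsDecoherenceFunctional (d : (E →L[ℂ] E) → (E →L[ℂ] E) → ℂ) : Prop where
  hermitian : ∀ p q, IsOrthoProj p → IsOrthoProj q → d p q = starRingEnd ℂ (d q p)
  pos : ∀ p, IsOrthoProj p → 0 ≤ d p p
  normalized : d 1 1 = 1
  orthoadd : ∀ p₁ p₂ q, IsOrthoProj p₁ → IsOrthoProj p₂ → IsOrthoProj q →
    p₁ * p₂ = 0 → d (p₁ + p₂) q = d p₁ q + d p₂ q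

/-- A decoherence functional is bounded if `{|d(p,q)|}` is a bounded set. -/
def DFBounded (d : (E →L[ℂ] E) → (E →L[ℂ] E) → ℂ) : Prop :=
  ∃ C : ℝ, ∀ p q, IsOrthoProj p → IsOrthoProj q → ‖d p q‖ ≤ C

/-- Countable additivity of a decoherence functional: for every countable
pairwise orthogonal family of projections summing (strongly) to `P`,
`d (P, q) = ∑ d (pᵢ, q)`. -/
def DFCountablyAdditive (d : (E →L[ℂ] E) → (E →L[ℂ] E) → ℂ) : Prop :=
  ∀ (p : ℕ → E →L[ℂ] E) (P q : E →L[ℂ] E),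
    (∀ i, IsOrthoProj (p i)) → IsOrthoProj P → IsOrthoProj q →
    (∀ i j, i ≠ j → p i * p j = 0) →
    (∀ x : E, HasSum (fun i => p i x) (P x)) →
    HasSum (fun i => d (p i) q) (d P q)

/-- Complete additivity of a decoherence functional. -/
def DFCompletelyAdditive (d : (E →L[ℂ] E) → (E →L[ℂ] E) → ℂ) : Prop :=
  ∀ (ι : Type u) (p : ι → E →L[ℂ] E) (P q : E →L[ℂ] E),
    (∀ i, IsOrthoProj (p i)) → IsOrthoProj P → IsOrthoProj q →
    (∀ i j, i ≠ j → p i * p j = 0) →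
    (∀ x : E, HasSum (fun i => p i x) (P x)) →
    HasSum (fun i => d (p i) q) (d P q)

/-- A bilinear form `D` on `B(𝔥) × B(𝔥)` is bounded. -/
def IsBoundedBilinear (D : (E →L[ℂ] E) →ₗ[ℂ] (E →L[ℂ] E) →ₗ[ℂ] ℂ) : Prop :=
  ∃ C : ℝ, ∀ x y : E →L[ℂ] E, ‖D x y‖ ≤ C * ‖x‖ * ‖y‖

/-- The bilinear form `D` extends the decoherence functional `d`. -/
def ExtendsDF (D : (E →L[ℂ] E) →ₗ[ℂ] (E →L[ℂ] E) →ₗ[ℂ] ℂ)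
    (d : (E →L[ℂ] E) → (E →L[ℂ] E) → ℂ) : Prop :=
  ∀ p q, IsOrthoProj p → IsOrthoProj q → D p q = d p q

/-- `T` is a trace class operator (via the standard characterisation: the sums
`∑ |⟪eᵢ, T fᵢ⟫|` over finite orthonormal families are uniformly bounded). -/
def IsTraceClass (T : E →L[ℂ] E) : Prop :=
  ∃ C : ℝ, ∀ (n : ℕ) (e f : Fin n → E), Orthonormal ℂ e → Orthonormal ℂ f →
    ∑ i, ‖⟪e i, T (f i)⟫‖ ≤ C

/-- The trace of an operator computed in the Hilbert basis `b` (for a trace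
class operator this is basis independent and is the usual trace). -/
def traceAlong {ι : Type*} (b : HilbertBasis ι ℂ E) (T : E →L[ℂ] E) : ℂ :=
  ∑' i, ⟪b i, T (b i)⟫

/-- The rank one orthogonal projection `p_ξ` onto the span of a unit vector `ξ`. -/
def rankOneProj (ξ : E) : E →L[ℂ] E :=
  (innerSL ℂ ξ).smulRight ξ

/-- An axiomatisation of the Hilbert space tensor product `G = E ⊗ E`:
a bilinear map `tmul` into `G` multiplying inner products and having dense span. -/
structure HilbertTensorProduct (E G : Type u) [NormedAddCommGroup E]
    [InnerProductSpace ℂ E] [NormedAddCommGroup G] [InnerProductSpace ℂ G] :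
    Type u where
  tmul : E →ₗ[ℂ] E →ₗ[ℂ] G
  inner_tmul : ∀ a b c d : E, ⟪tmul a b, tmul c d⟫ = ⟪a, c⟫ * ⟪b, d⟫
  dense_span : Dense (↑(Submodule.span ℂ (Set.range fun z : E × E => tmul z.1 z.2)) : Set G)

/-- The algebraic tensor product `E ⊗_alg E`, viewed as a (dense) subspace of `G`. -/
def HilbertTensorProduct.algSpan (J : HilbertTensorProduct E G) : Submodule ℂ G :=
  Submodule.span ℂ (Set.range fun z : E × E => J.tmul z.1 z.2)

/-- The Hilbert space tensor product together with the operator tensor product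
`(x, y) ↦ x ⊗ y` on bounded operators. -/
structure OperatorTensor (E G : Type u) [NormedAddCommGroup E]
    [InnerProductSpace ℂ E] [NormedAddCommGroup G] [InnerProductSpace ℂ G]
    extends HilbertTensorProduct E G where
  op : (E →L[ℂ] E) → (E →L[ℂ] E) → (G →L[ℂ] G)
  op_tmul : ∀ (x y : E →L[ℂ] E) (a b : E), op x y (tmul a b) = tmul (x a) (y b)

/-- The algebraic tensor product `K(𝔥) • K(𝔥)`: the span in `B(G)` of the
operators `x ⊗ y` with `x, y` compact. -/
def OperatorTensor.compactSpan (J : OperatorTensor E G) : Submodule ℂ (G →L[ℂ] G) :=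
  Submodule.span ℂ {T | ∃ x y : E →L[ℂ] E,
    IsCompactOperator (⇑x) ∧ IsCompactOperator (⇑y) ∧ T = J.op x y}

/-- `β` is the linear functional on `K(𝔥) • K(𝔥)` induced by the bilinear form
`D`, i.e. `β (x ⊗ y) = D (x, y)` for compact `x, y`. -/
def IsBetaFor (J : OperatorTensor E G)
    (D : (E →L[ℂ] E) →ₗ[ℂ] (E →L[ℂ] E) →ₗ[ℂ] ℂ)
    (β : ↥J.compactSpan →ₗ[ℂ] ℂ) : Prop :=
  ∀ x y : E →L[ℂ] E, IsCompactOperator (⇑x) → IsCompactOperator (⇑y) →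
    ∀ hm : J.op x y ∈ J.compactSpan, β ⟨J.op x y, hm⟩ = D x y

/-- `β` is bounded for the operator norm (inherited from `B(G)`). -/
def BetaNormBounded (J : OperatorTensor E G) (β : ↥J.compactSpan →ₗ[ℂ] ℂ) : Prop :=
  ∃ C : ℝ, ∀ S : J.compactSpan, ‖β S‖ ≤ C * ‖(S : G →L[ℂ] G)‖

/-- A decoherence functional is tensor bounded if its associated functional `β`
on `K(𝔥) • K(𝔥)` is bounded for the (pre-)C*-norm. -/
def IsTensorBounded (J : OperatorTensor E G)
    (d : (E →L[ℂ] E) → (E →L[ℂ] E) → ℂ) : Prop :=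
  ∃ D, IsBoundedBilinear D ∧ ExtendsDF D d ∧
    ∃ β, IsBetaFor J D β ∧ BetaNormBounded J β

/-- `β` is uniformly bounded on the projections `p_ξ`, `ξ` a unit vector of the
algebraic tensor product `𝔥 ⊗_alg 𝔥`. -/
def BetaTraciallyBounded (J : OperatorTensor E G) (β : ↥J.compactSpan →ₗ[ℂ] ℂ) : Prop :=
  ∃ C : ℝ, ∀ ξ : G, ξ ∈ J.toHilbertTensorProduct.algSpan → ‖ξ‖ = 1 →
    ∀ hm : rankOneProj ξ ∈ J.compactSpan, ‖β ⟨rankOneProj ξ, hm⟩‖ ≤ C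

/-- A decoherence functional is tracially bounded if it is bounded and its
associated functional `β` is uniformly bounded on rank one projections `p_ξ`
with `ξ` a unit vector in `𝔥 ⊗_alg 𝔥`. -/
def IsTraciallyBounded (J : OperatorTensor E G)
    (d : (E →L[ℂ] E) → (E →L[ℂ] E) → ℂ) : Prop :=
  DFBounded d ∧ ∃ D, IsBoundedBilinear D ∧ ExtendsDF D d ∧
    ∃ β, IsBetaFor J D β ∧ BetaTraciallyBounded J β

/-!
The passage from projections to operators is the Mackey–Gleason phenomenon, which in infinite
dimension has an algebraic proof. If projections `p i ≤ K` satisfy `∑ p i = N • K` and there is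
room outside `K`, the `p i` dilate to a matrix of projections whose rows sum to the `p i` and whose
columns sum to `K`, up to projections in the room. So for a bounded finitely additive measure `m`
the defect `∑ m (p i) - N * m K` is a combination of boundedly many values of `m` on the room;
repeating this in `n` orthogonal rooms and adding up shows that `n` times the defect is bounded
independently of `n`, and the defect vanishes. A general linear relation among projections `p`
reduces to this case by means of isometries `v`, `v'` with orthogonal ranges and `v* p v' = 0`:
each `p` is then the sum of a projection that leaves the range of `v` as room and one that leaves
the range of `v'`. Self-adjoint elements of the unit ball are differences of boundedly many
projections, by Halmos projections and infinite ampliations, so `m` extends to a bounded linear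
functional and `d` to a bounded bilinear form `D`.

If `β` is bounded, a Hahn–Banach extension of it restricts to a functional on the compact operators
of `𝔥 ⊗ 𝔥`, which is given by a trace class operator `𝔛`. Conversely `D` and `tr ((· ⊗ ·) 𝔛)` agree
on rank one projections, hence by continuity on compact operators. In finite dimension the form
`tr ((· ⊗ ·) 𝔛)` itself serves as `D`.
-/

section StarProjection

section StarRing

variable {A : Type*} [Ring A] [StarRing A] {a b g h p q r v w : A}

theorem star_mul_eq_zero_comm : star g * h = 0 ↔ star h * g = 0 := by
  rw [← star_eq_zero, star_mul, star_star]

theorem mul_eq_self_of_isSelfAdjoint (ha : IsSelfAdjoint a) (hb : IsSelfAdjoint b)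
    (hab : a * b = a) : b * a = a := by
  simpa [ha.star_eq, hb.star_eq] using congr(star $hab)

theorem isStarProjection_mul_star_self (hg : star g * g = p) (hgp : g * p = g) :
    IsStarProjection (g * star g) where
  isIdempotentElem := by
    rw [IsIdempotentElem, mul_assoc, ← mul_assoc (star g), hg, ← mul_assoc, hgp]
  isSelfAdjoint := .mul_star_self g

theorem isStarProjection_mul_star_of_isometry (hv : star v * v = 1) :
    IsStarProjection (v * star v) :=
  isStarProjection_mul_star_self hv (mul_one v)

theorem isStarProjection_conj (hw : star w * w = 1) (hp : IsStarProjection p) :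
    IsStarProjection (w * p * star w) where
  isIdempotentElem := by
    calc w * p * star w * (w * p * star w) = w * (p * (star w * w) * p) * star w := by
          simp only [mul_assoc]
      _ = w * p * star w := by rw [hw, mul_one, hp.isIdempotentElem.eq]
  isSelfAdjoint := hp.isSelfAdjoint.conjugate w

theorem isStarProjection_sum {ι : Type*} {s : Finset ι} {p : ι → A}
    (hp : ∀ i ∈ s, IsStarProjection (p i))
    (hort : (s : Set ι).Pairwise fun i j ↦ p i * p j = 0) :
    IsStarProjection (∑ i ∈ s, p i) := by
  classical
  induction s using Finset.induction_on with
  | empty => simp [IsStarProjection.zero]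
  | insert i s hi ih =>
    rw [Finset.coe_insert, Set.pairwise_insert_of_notMem (by simpa using hi)] at hort
    rw [Finset.forall_mem_insert] at hp
    rw [Finset.sum_insert hi]
    refine hp.1.add (ih hp.2 hort.1) ?_
    rw [Finset.mul_sum]
    exact Finset.sum_eq_zero fun j hj ↦ (hort.2 j hj).1

end StarRing

end StarProjection

section ProjectionMeasure

variable {A : Type*} [Ring A] [StarRing A]

/-- `m` is a finitely additive complex measure on the projections of `A` whose values are bounded
by `C`. Only the values of `m` at projections are constrained. -/
structure IsProjectionMeasure (m : A → ℂ) (C : ℝ) : Prop where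
  add : ∀ p q, IsStarProjection p → IsStarProjection q → p * q = 0 → m (p + q) = m p + m q
  norm_le : ∀ p, IsStarProjection p → ‖m p‖ ≤ C

namespace IsProjectionMeasure

variable {m : A → ℂ} {C : ℝ} {p q : A}

theorem map_zero (hm : IsProjectionMeasure m C) : m 0 = 0 := by
  simpa using hm.add 0 0 (.zero A) (.zero A) (by simp)

theorem bound_nonneg (hm : IsProjectionMeasure m C) : 0 ≤ C :=
  (norm_nonneg _).trans (hm.norm_le 0 (.zero A))

theorem map_sum (hm : IsProjectionMeasure m C) {ι : Type*} {s : Finset ι} {p : ι → A}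
    (hp : ∀ i ∈ s, IsStarProjection (p i))
    (hort : (s : Set ι).Pairwise fun i j ↦ p i * p j = 0) :
    m (∑ i ∈ s, p i) = ∑ i ∈ s, m (p i) := by
  classical
  induction s using Finset.induction_on with
  | empty => simpa using hm.map_zero
  | insert i s hi ih =>
    rw [Finset.coe_insert, Set.pairwise_insert_of_notMem (by simpa using hi)] at hort
    rw [Finset.forall_mem_insert] at hp
    rw [Finset.sum_insert hi, Finset.sum_insert hi, ← ih hp.2 hort.1]
    refine hm.add _ _ hp.1 (isStarProjection_sum hp.2 hort.1) ?_
    rw [Finset.mul_sum]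
    exact Finset.sum_eq_zero fun j hj ↦ (hort.2 j hj).1

theorem map_sub (hm : IsProjectionMeasure m C) (hp : IsStarProjection p)
    (hq : IsStarProjection q) (hpq : p * q = q) : m (p - q) = m p - m q := by
  have hort : (p - q) * q = 0 := by rw [sub_mul, hpq, hq.isIdempotentElem.eq, sub_self]
  have := hm.add (p - q) q (hq.sub_of_mul_eq_right hp hpq) hq hort
  rw [sub_add_cancel] at this
  rw [this, add_sub_cancel_right]

end IsProjectionMeasure

end ProjectionMeasure

section Dilation

variable {A : Type*} [Ring A] [StarRing A]

theorem star_sum_mul_sum_of_orthonormal {κ : Type*} [Fintype κ] [DecidableEq κ] {s : κ → A}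
    (hs : ∀ a b, star (s a) * s b = if a = b then 1 else 0) (x y : κ → A) :
    star (∑ a, s a * x a) * ∑ a, s a * y a = ∑ a, star (x a) * y a := by
  have hterm a b : star (s a * x a) * (s b * y b) = if a = b then star (x a) * y b else 0 := by
    calc star (s a * x a) * (s b * y b) = star (x a) * (star (s a) * s b) * y b := by
          simp only [star_mul, mul_assoc]
      _ = _ := by rw [hs]; split_ifs <;> simp
  simp only [star_sum, Finset.sum_mul, Finset.mul_sum, hterm, Finset.sum_ite_eq',
    Finset.mem_univ, if_true]

/-- The entries of the orthogonal projection of `ℂᴺ` onto the vectors with coordinate sum `0`. -/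
def centering (N : ℕ) (j k : Fin N) : ℂ := (if j = k then 1 else 0) - 1 / N

theorem star_centering (N : ℕ) (j k : Fin N) : star (centering N j k) = centering N k j := by
  simp [centering, apply_ite, eq_comm]

theorem sum_centering {N : ℕ} (hN : N ≠ 0) (j : Fin N) : ∑ k, centering N j k = 0 := by
  simp [centering, hN]

theorem sum_centering_mul {N : ℕ} (hN : N ≠ 0) (j k : Fin N) :
    ∑ l, centering N j l * centering N l k = centering N j k := by
  have hterm l : centering N j l * centering N l k =
      (if l = k then centering N j l else 0) - centering N j l * (1 / N) := by
    rw [centering.eq_def N l k]; split_ifs <;> ring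
  simp only [hterm, Finset.sum_sub_distrib, ← Finset.sum_mul, sum_centering hN]
  simp

variable [Algebra ℂ A] {ι : Type*} [Fintype ι] [DecidableEq ι] {N : ℕ} {p : ι → A} {K : A}
  {s : ι × Fin N → A}

/-- Projections `p i ≤ K` with `∑ p i = N • K`, together with isometries `s a` whose ranges are
mutually orthogonal and orthogonal to `K`. The ranges of the `s a` are the room in which the `p i`
are dilated to a matrix of projections. -/
structure IsDilatable (N : ℕ) (p : ι → A) (K : A) (s : ι × Fin N → A) : Prop where
  two_le : 2 ≤ N
  proj (i : ι) : IsStarProjection (p i)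
  proj_top : IsStarProjection K
  mul_top (i : ι) : p i * K = p i
  sum_eq : ∑ i, p i = (N : ℂ) • K
  orthonormal (a b : ι × Fin N) : star (s a) * s b = if a = b then 1 else 0
  top_mul_room (a : ι × Fin N) : K * s a = 0

/-- `√(1 / N)`, the weight of `p i` in its dilations. -/
def innerWeight (N : ℕ) : ℂ := (√(1 / N : ℝ) : ℝ)

/-- `√(N / (N - 1))`, the weight of the room in the dilations of `p i`. -/
def outerWeight (N : ℕ) : ℂ := (√(N / (N - 1) : ℝ) : ℝ)

theorem star_innerWeight (N : ℕ) : star (innerWeight N) = innerWeight N := Complex.conj_ofReal _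

theorem star_outerWeight (N : ℕ) : star (outerWeight N) = outerWeight N := Complex.conj_ofReal _

theorem innerWeight_mul_self (N : ℕ) : innerWeight N * innerWeight N = 1 / N := by
  rw [innerWeight, ← Complex.ofReal_mul, Real.mul_self_sqrt (by positivity)]
  push_cast; rfl

theorem outerWeight_mul_self {N : ℕ} (hN : 1 ≤ N) :
    outerWeight N * outerWeight N = N / (N - 1) := by
  have : (0 : ℝ) ≤ N - 1 := sub_nonneg.2 (mod_cast hN)
  rw [outerWeight, ← Complex.ofReal_mul, Real.mul_self_sqrt (by positivity)]
  push_cast; rfl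

/-- The entries of the self-adjoint idempotent matrix `diag(p i) - N⁻¹ (p i * p k)`, the analogue of
`centering` for projections with `∑ p i = N • K`. -/
def projCentering (N : ℕ) (p : ι → A) (i k : ι) : A :=
  (if i = k then p i else 0) - (1 / N : ℂ) • (p i * p k)

/-- The component outside `K` of the `j`-th dilation of `p i`. -/
def roomPart (N : ℕ) (p : ι → A) (s : ι × Fin N → A) (i : ι) (j : Fin N) : A :=
  ∑ a, s a * (centering N a.2 j • projCentering N p a.1 i)

/-- The `j`-th dilation of `p i`, a partial isometry with initial projection `p i`. -/
def dilation (N : ℕ) (p : ι → A) (s : ι × Fin N → A) (i : ι) (j : Fin N) : A :=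
  innerWeight N • p i + outerWeight N • roomPart N p s i j

/-- The final projection of `dilation N p s i j`. -/
def dilationProj (N : ℕ) (p : ι → A) (s : ι × Fin N → A) (i : ι) (j : Fin N) : A :=
  dilation N p s i j * star (dilation N p s i j)

theorem dilationProj_mul_eq_zero {i i' : ι} {j j' : Fin N}
    (hort : star (dilation N p s i j) * dilation N p s i' j' = 0) :
    dilationProj N p s i j * dilationProj N p s i' j' = 0 := by
  rw [dilationProj, dilationProj, mul_assoc, ← mul_assoc (star _), hort, zero_mul, mul_zero]

/-- The part of the `i`-th row of dilated projections that does not come from `p i`. -/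
def rowRemainder (N : ℕ) (p : ι → A) (s : ι × Fin N → A) (i : ι) : A :=
  ∑ j, dilationProj N p s i j - p i

/-- The part of the `j`-th column of dilated projections that does not come from `K`. -/
def columnRemainder (N : ℕ) (p : ι → A) (K : A) (s : ι × Fin N → A) (j : Fin N) : A :=
  ∑ i, dilationProj N p s i j - K

namespace IsDilatable

theorem ne_zero (h : IsDilatable N p K s) : N ≠ 0 := by have := h.two_le; lia

theorem natCast_ne_zero (h : IsDilatable N p K s) : (N : ℂ) ≠ 0 := mod_cast h.ne_zero

theorem natCast_sub_one_ne_zero (h : IsDilatable N p K s) : (N - 1 : ℂ) ≠ 0 :=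
  sub_ne_zero.2 (mod_cast (Nat.lt_of_succ_le h.two_le).ne')

theorem proj_mul_self (h : IsDilatable N p K s) (i : ι) : p i * p i = p i :=
  (h.proj i).isIdempotentElem

theorem star_proj (h : IsDilatable N p K s) (i : ι) : star (p i) = p i :=
  (h.proj i).isSelfAdjoint

theorem top_mul (h : IsDilatable N p K s) (i : ι) : K * p i = p i :=
  mul_eq_self_of_isSelfAdjoint (h.proj i).isSelfAdjoint h.proj_top.isSelfAdjoint (h.mul_top i)

theorem proj_mul_room (h : IsDilatable N p K s) (i : ι) (a : ι × Fin N) : p i * s a = 0 := by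
  rw [← h.mul_top i, mul_assoc, h.top_mul_room, mul_zero]

theorem star_room_mul_top (h : IsDilatable N p K s) (a : ι × Fin N) : star (s a) * K = 0 := by
  rw [star_mul_eq_zero_comm, h.proj_top.isSelfAdjoint.star_eq, h.top_mul_room]

theorem mul_projCentering (h : IsDilatable N p K s) (i k : ι) :
    p i * projCentering N p i k = projCentering N p i k := by
  simp only [projCentering, mul_sub, mul_ite, mul_zero, mul_smul_comm, ← mul_assoc,
    h.proj_mul_self]

theorem projCentering_mul (h : IsDilatable N p K s) (i k : ι) :
    projCentering N p i k * p k = projCentering N p i k := by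
  simp only [projCentering, sub_mul, ite_mul, zero_mul, smul_mul_assoc, mul_assoc, h.proj_mul_self]
  split_ifs with hik <;> simp only [hik, h.proj_mul_self]

theorem sum_projCentering (h : IsDilatable N p K s) (i : ι) : ∑ k, projCentering N p i k = 0 := by
  have hN := h.natCast_ne_zero
  simp only [projCentering, Finset.sum_sub_distrib, ← Finset.smul_sum, ← Finset.mul_sum, h.sum_eq]
  simp [h.mul_top, smul_smul, hN]

theorem sum_projCentering_left (h : IsDilatable N p K s) (k : ι) :
    ∑ i, projCentering N p i k = 0 := by
  have hN := h.natCast_ne_zero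
  simp only [projCentering, Finset.sum_sub_distrib, ← Finset.smul_sum, ← Finset.sum_mul, h.sum_eq]
  simp [h.top_mul, smul_smul, hN]

theorem sum_projCentering_mul (h : IsDilatable N p K s) (i k : ι) :
    ∑ l, projCentering N p i l * projCentering N p l k = projCentering N p i k := by
  have hterm l : projCentering N p i l * projCentering N p l k =
      (if i = l then projCentering N p i k else 0) -
        (1 / N : ℂ) • (p i * projCentering N p l k) := by
    rw [projCentering.eq_def N p i l, sub_mul, smul_mul_assoc, mul_assoc, h.mul_projCentering]
    split_ifs with hil
    · rw [← hil, h.mul_projCentering]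
    · rw [zero_mul]
  simp only [hterm, Finset.sum_sub_distrib, ← Finset.smul_sum, ← Finset.mul_sum]
  rw [h.sum_projCentering_left, mul_zero, smul_zero, sub_zero, Finset.sum_ite_eq,
    if_pos (Finset.mem_univ i)]

theorem star_projCentering [StarModule ℂ A] (h : IsDilatable N p K s) (i k : ι) :
    star (projCentering N p i k) = projCentering N p k i := by
  unfold projCentering
  split_ifs with hik hki hki <;> simp_all [h.star_proj]

theorem mul_roomPart (h : IsDilatable N p K s) (i i' : ι) (j : Fin N) :
    p i * roomPart N p s i' j = 0 := by
  simp only [roomPart, Finset.mul_sum, ← mul_assoc, h.proj_mul_room, zero_mul,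
    Finset.sum_const_zero]

theorem star_roomPart_mul_top (h : IsDilatable N p K s) (i : ι) (j : Fin N) :
    star (roomPart N p s i j) * K = 0 := by
  simp only [roomPart, star_sum, star_mul, Finset.sum_mul, mul_assoc, h.star_room_mul_top,
    mul_zero, Finset.sum_const_zero]

theorem star_roomPart_mul (h : IsDilatable N p K s) (i i' : ι) (j : Fin N) :
    star (roomPart N p s i j) * p i' = 0 := by
  rw [← h.top_mul i', ← mul_assoc, h.star_roomPart_mul_top, zero_mul]

theorem roomPart_mul (h : IsDilatable N p K s) (i : ι) (j : Fin N) :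
    roomPart N p s i j * p i = roomPart N p s i j := by
  simp only [roomPart, Finset.sum_mul, mul_assoc, smul_mul_assoc, h.projCentering_mul]

theorem star_roomPart_mul_room (h : IsDilatable N p K s) (i : ι) (j : Fin N) :
    star (roomPart N p s i j) * ∑ a, s a * star (s a) = star (roomPart N p s i j) := by
  rw [roomPart, star_sum_mul_sum_of_orthonormal h.orthonormal]
  simp only [star_sum, star_mul]

theorem sum_roomPart_left (h : IsDilatable N p K s) (j : Fin N) :
    ∑ i, roomPart N p s i j = 0 := by
  simp only [roomPart]
  rw [Finset.sum_comm]
  simp only [← Finset.mul_sum, ← Finset.smul_sum, h.sum_projCentering, smul_zero, mul_zero,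
    Finset.sum_const_zero]

theorem sum_roomPart_right (h : IsDilatable N p K s) (i : ι) :
    ∑ j, roomPart N p s i j = 0 := by
  simp only [roomPart]
  rw [Finset.sum_comm]
  simp only [← Finset.mul_sum, ← Finset.sum_smul, sum_centering h.ne_zero,
    zero_smul, mul_zero, Finset.sum_const_zero]

theorem top_mul_sum_room (h : IsDilatable N p K s) : K * ∑ a, s a * star (s a) = 0 := by
  simp only [Finset.mul_sum, ← mul_assoc, h.top_mul_room, zero_mul, Finset.sum_const_zero]

theorem dilation_mul (h : IsDilatable N p K s) (i : ι) (j : Fin N) :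
    dilation N p s i j * p i = dilation N p s i j := by
  rw [dilation, add_mul, smul_mul_assoc, smul_mul_assoc, h.proj_mul_self, h.roomPart_mul]

variable [StarModule ℂ A]

theorem star_dilation (h : IsDilatable N p K s) (i : ι) (j : Fin N) :
    star (dilation N p s i j) =
      innerWeight N • p i + outerWeight N • star (roomPart N p s i j) := by
  rw [dilation, star_add, star_smul, star_smul, star_innerWeight, star_outerWeight, h.star_proj]

theorem star_roomPart_mul_roomPart (h : IsDilatable N p K s) (i i' : ι) (j j' : Fin N) :
    star (roomPart N p s i j) * roomPart N p s i' j' =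
      centering N j j' • projCentering N p i i' := by
  rw [roomPart, roomPart, star_sum_mul_sum_of_orthonormal h.orthonormal,
    ← h.sum_projCentering_mul, ← sum_centering_mul h.ne_zero, Fintype.sum_prod_type_right,
    Finset.sum_smul]
  refine Finset.sum_congr rfl fun k _ ↦ ?_
  rw [Finset.smul_sum]
  refine Finset.sum_congr rfl fun l _ ↦ ?_
  rw [star_smul, star_centering, h.star_projCentering, smul_mul_smul_comm]

theorem star_dilation_mul_dilation (h : IsDilatable N p K s) (i i' : ι) (j j' : Fin N) :
    star (dilation N p s i j) * dilation N p s i' j' =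
      (1 / N : ℂ) • (p i * p i') +
        (N / (N - 1) * centering N j j' : ℂ) • projCentering N p i i' := by
  rw [h.star_dilation, dilation]
  simp only [add_mul, mul_add, smul_mul_smul_comm, h.mul_roomPart,
    h.star_roomPart_mul, h.star_roomPart_mul_roomPart, smul_zero, add_zero, zero_add]
  rw [smul_smul, innerWeight_mul_self, outerWeight_mul_self (one_le_two.trans h.two_le)]

theorem star_dilation_mul_self (h : IsDilatable N p K s) (i : ι) (j : Fin N) :
    star (dilation N p s i j) * dilation N p s i j = p i := by
  have hN := h.natCast_ne_zero
  have := h.natCast_sub_one_ne_zero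
  rw [h.star_dilation_mul_dilation, projCentering, centering, if_pos rfl, if_pos rfl,
    h.proj_mul_self]
  match_scalars
  field_simp
  ring

theorem star_dilation_mul_of_ne_left (h : IsDilatable N p K s) {i i' : ι} (hi : i ≠ i')
    (j : Fin N) : star (dilation N p s i j) * dilation N p s i' j = 0 := by
  have hN := h.natCast_ne_zero
  have hN1 := h.natCast_sub_one_ne_zero
  rw [h.star_dilation_mul_dilation, projCentering, centering, if_pos rfl, if_neg hi]
  match_scalars
  field_simp
  ring

theorem star_dilation_mul_of_ne_right (h : IsDilatable N p K s) (i : ι) {j j' : Fin N}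
    (hj : j ≠ j') : star (dilation N p s i j) * dilation N p s i j' = 0 := by
  have hN := h.natCast_ne_zero
  have hN1 := h.natCast_sub_one_ne_zero
  rw [h.star_dilation_mul_dilation, projCentering, centering, if_pos rfl, if_neg hj,
    h.proj_mul_self]
  match_scalars
  field_simp
  ring

theorem isStarProjection_dilationProj (h : IsDilatable N p K s) (i : ι) (j : Fin N) :
    IsStarProjection (dilationProj N p s i j) :=
  isStarProjection_mul_star_self (h.star_dilation_mul_self i j) (h.dilation_mul i j)

theorem pairwise_row (h : IsDilatable N p K s) (i : ι) :
    ((Finset.univ : Finset (Fin N)) : Set (Fin N)).Pairwise fun j j' ↦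
      dilationProj N p s i j * dilationProj N p s i j' = 0 :=
  fun _ _ _ _ hj ↦ dilationProj_mul_eq_zero (h.star_dilation_mul_of_ne_right i hj)

theorem pairwise_column (h : IsDilatable N p K s) (j : Fin N) :
    ((Finset.univ : Finset ι) : Set ι).Pairwise fun i i' ↦
      dilationProj N p s i j * dilationProj N p s i' j = 0 :=
  fun _ _ _ _ hi ↦ dilationProj_mul_eq_zero (h.star_dilation_mul_of_ne_left hi j)

theorem dilationProj_mul_top (h : IsDilatable N p K s) (i : ι) (j : Fin N) :
    dilationProj N p s i j * K =
      (1 / N : ℂ) • p i + (innerWeight N * outerWeight N) • roomPart N p s i j := by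
  rw [dilationProj, mul_assoc, h.star_dilation, add_mul, smul_mul_assoc, smul_mul_assoc,
    h.star_roomPart_mul_top, h.mul_top, smul_zero, add_zero, mul_smul_comm, h.dilation_mul,
    dilation, smul_add, smul_smul, smul_smul, innerWeight_mul_self]

theorem row_mul_top (h : IsDilatable N p K s) (i : ι) :
    (∑ j, dilationProj N p s i j) * K = p i := by
  simp only [Finset.sum_mul, h.dilationProj_mul_top, Finset.sum_add_distrib, ← Finset.smul_sum,
    h.sum_roomPart_right, smul_zero, add_zero, Finset.sum_const, Finset.card_univ, Fintype.card_fin]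
  rw [← Nat.cast_smul_eq_nsmul ℂ, smul_smul, one_div_mul_cancel h.natCast_ne_zero, one_smul]

theorem column_mul_top (h : IsDilatable N p K s) (j : Fin N) :
    (∑ i, dilationProj N p s i j) * K = K := by
  simp only [Finset.sum_mul, h.dilationProj_mul_top, Finset.sum_add_distrib, ← Finset.smul_sum,
    h.sum_roomPart_left, smul_zero, add_zero, h.sum_eq]
  rw [smul_smul, one_div_mul_cancel h.natCast_ne_zero, one_smul]

theorem row_mul (h : IsDilatable N p K s) (i : ι) :
    (∑ j, dilationProj N p s i j) * p i = p i := by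
  rw [← h.top_mul i, ← mul_assoc, h.row_mul_top, h.proj_mul_self, h.top_mul]

theorem isStarProjection_row (h : IsDilatable N p K s) (i : ι) :
    IsStarProjection (∑ j, dilationProj N p s i j) :=
  isStarProjection_sum (fun j _ ↦ h.isStarProjection_dilationProj i j) (h.pairwise_row i)

theorem isStarProjection_column (h : IsDilatable N p K s) (j : Fin N) :
    IsStarProjection (∑ i, dilationProj N p s i j) :=
  isStarProjection_sum (fun i _ ↦ h.isStarProjection_dilationProj i j) (h.pairwise_column j)

theorem isStarProjection_rowRemainder (h : IsDilatable N p K s) (i : ι) :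
    IsStarProjection (rowRemainder N p s i) :=
  (h.proj i).sub_of_mul_eq_right (h.isStarProjection_row i) (h.row_mul i)

theorem isStarProjection_columnRemainder (h : IsDilatable N p K s) (j : Fin N) :
    IsStarProjection (columnRemainder N p K s j) :=
  h.proj_top.sub_of_mul_eq_right (h.isStarProjection_column j) (h.column_mul_top j)

theorem star_dilation_mul_room (h : IsDilatable N p K s) (i : ι) (j : Fin N) :
    star (dilation N p s i j) * ∑ a, s a * star (s a) =
      star (dilation N p s i j) * (1 - K) := by
  have hp : p i * ∑ a, s a * star (s a) = 0 := by
    rw [← h.mul_top i, mul_assoc, h.top_mul_sum_room, mul_zero]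
  have hK : p i * (1 - K) = 0 := by rw [mul_sub, mul_one, h.mul_top, sub_self]
  have hroom : star (roomPart N p s i j) * (1 - K) = star (roomPart N p s i j) := by
    rw [mul_sub, mul_one, h.star_roomPart_mul_top, sub_zero]
  simp only [h.star_dilation, add_mul, smul_mul_assoc, hp, hK, hroom, h.star_roomPart_mul_room]

theorem dilationProj_mul_room (h : IsDilatable N p K s) (i : ι) (j : Fin N) :
    dilationProj N p s i j * ∑ a, s a * star (s a) = dilationProj N p s i j * (1 - K) := by
  rw [dilationProj, mul_assoc, h.star_dilation_mul_room, mul_assoc]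

theorem rowRemainder_mul_room (h : IsDilatable N p K s) (i : ι) :
    rowRemainder N p s i * ∑ a, s a * star (s a) = rowRemainder N p s i := by
  have hp : p i * ∑ a, s a * star (s a) = 0 := by
    rw [← h.mul_top i, mul_assoc, h.top_mul_sum_room, mul_zero]
  rw [rowRemainder, sub_mul, hp, sub_zero, Finset.sum_mul]
  simp only [h.dilationProj_mul_room, ← Finset.sum_mul]
  rw [mul_sub, mul_one, h.row_mul_top]

theorem columnRemainder_mul_room (h : IsDilatable N p K s) (j : Fin N) :
    columnRemainder N p K s j * ∑ a, s a * star (s a) = columnRemainder N p K s j := by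
  rw [columnRemainder, sub_mul, h.top_mul_sum_room, sub_zero, Finset.sum_mul]
  simp only [h.dilationProj_mul_room, ← Finset.sum_mul]
  rw [mul_sub, mul_one, h.column_mul_top]

theorem sum_add_sum_rowRemainder (h : IsDilatable N p K s) {m : A → ℂ} {C : ℝ}
    (hm : IsProjectionMeasure m C) :
    ∑ i, m (p i) + ∑ i, m (rowRemainder N p s i) =
      N * m K + ∑ j, m (columnRemainder N p K s j) := by
  have hrow i : m (p i) + m (rowRemainder N p s i) = ∑ j, m (dilationProj N p s i j) := by
    rw [rowRemainder, hm.map_sub (h.isStarProjection_row i) (h.proj i) (h.row_mul i),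
      hm.map_sum (fun j _ ↦ h.isStarProjection_dilationProj i j) (h.pairwise_row i)]
    ring
  have hcolumn j : m K + m (columnRemainder N p K s j) = ∑ i, m (dilationProj N p s i j) := by
    rw [columnRemainder, hm.map_sub (h.isStarProjection_column j) h.proj_top (h.column_mul_top j),
      hm.map_sum (fun i _ ↦ h.isStarProjection_dilationProj i j) (h.pairwise_column j)]
    ring
  calc ∑ i, m (p i) + ∑ i, m (rowRemainder N p s i) = ∑ i, ∑ j, m (dilationProj N p s i j) := by
        rw [← Finset.sum_add_distrib, Finset.sum_congr rfl fun i _ ↦ hrow i]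
    _ = ∑ j, ∑ i, m (dilationProj N p s i j) := Finset.sum_comm
    _ = N * m K + ∑ j, m (columnRemainder N p K s j) := by
        rw [← Finset.sum_congr rfl fun j _ ↦ hcolumn j, Finset.sum_add_distrib]
        simp

end IsDilatable

end Dilation

section Swindle

variable {A : Type*} [Ring A] [StarRing A]

namespace IsProjectionMeasure

variable {m : A → ℂ} {C : ℝ}

theorem norm_sum_le (hm : IsProjectionMeasure m C) {ι : Type*} {s : Finset ι} {p : ι → A}
    (hp : ∀ i ∈ s, IsStarProjection (p i))
    (hort : (s : Set ι).Pairwise fun i j ↦ p i * p j = 0) :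
    ‖∑ i ∈ s, m (p i)‖ ≤ C := by
  rw [← hm.map_sum hp hort]
  exact hm.norm_le _ (isStarProjection_sum hp hort)

end IsProjectionMeasure

theorem eq_zero_of_forall_natCast_mul_norm_le {z : ℂ} {B : ℝ} (h : ∀ n : ℕ, n * ‖z‖ ≤ B) :
    z = 0 := by
  by_contra hz
  obtain ⟨n, hn⟩ := exists_nat_gt (B / ‖z‖)
  rw [div_lt_iff₀ (norm_pos_iff.2 hz)] at hn
  exact absurd (h n) hn.not_ge

theorem mul_eq_zero_of_le_orthogonal {e f x y : A} (hx : x * e = x) (hy : y * f = y)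
    (hys : IsSelfAdjoint y) (hfs : IsSelfAdjoint f) (hef : e * f = 0) : x * y = 0 := by
  rw [← hx, ← mul_eq_self_of_isSelfAdjoint hys hfs hy, mul_assoc, ← mul_assoc e, hef, zero_mul,
    mul_zero]

theorem sum_mul_star_mul_eq_zero {κ : Type*} [Fintype κ] {s t : κ → A}
    (hst : ∀ a b, star (s a) * t b = 0) :
    (∑ a, s a * star (s a)) * ∑ b, t b * star (t b) = 0 := by
  rw [Finset.sum_mul_sum]
  refine Finset.sum_eq_zero fun a _ ↦ Finset.sum_eq_zero fun b _ ↦ ?_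
  rw [mul_assoc, ← mul_assoc (star _), hst, zero_mul, mul_zero]

theorem norm_sum_le_of_orthogonal_rooms {κ : Type*} [Fintype κ] {s : ℕ → κ → A} {m : A → ℂ} {C : ℝ}
    (hs : ∀ k l, k ≠ l → ∀ a b, star (s k a) * s l b = 0) (hm : IsProjectionMeasure m C)
    {x : ℕ → A} (hx : ∀ l, IsStarProjection (x l))
    (hxs : ∀ l, x l * ∑ a, s l a * star (s l a) = x l) (n : ℕ) :
    ‖∑ l ∈ Finset.range n, m (x l)‖ ≤ C :=
  hm.norm_sum_le (fun l _ ↦ hx l) fun k _ l _ hkl ↦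
    mul_eq_zero_of_le_orthogonal (hxs k) (hxs l) (hx l).isSelfAdjoint
      (isSelfAdjoint_sum _ fun _ _ ↦ .mul_star_self _) (sum_mul_star_mul_eq_zero (hs k l hkl))

variable [Algebra ℂ A] [StarModule ℂ A]

/-- With infinitely many mutually orthogonal rooms the defect `∑ m (p i) - N * m K` is repeated
arbitrarily often, while the remainders add up to boundedly many projections. -/
theorem IsDilatable.sum_map_eq {ι : Type*} [Fintype ι] [DecidableEq ι] {N : ℕ} {p : ι → A} {K : A}
    {s : ℕ → ι × Fin N → A} {m : A → ℂ} {C : ℝ} (h : ∀ l, IsDilatable N p K (s l))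
    (hs : ∀ k l, k ≠ l → ∀ a b, star (s k a) * s l b = 0) (hm : IsProjectionMeasure m C) :
    ∑ i, m (p i) = N * m K := by
  have hdefect (n : ℕ) : (n : ℂ) * (∑ i, m (p i) - N * m K) =
      ∑ j, ∑ l ∈ Finset.range n, m (columnRemainder N p K (s l) j) -
        ∑ i, ∑ l ∈ Finset.range n, m (rowRemainder N p (s l) i) := by
    rw [Finset.sum_comm, Finset.sum_comm (s := Finset.univ) (t := Finset.range n),
      ← Finset.sum_sub_distrib, Finset.sum_congr rfl fun l _ ↦ sub_eq_sub_iff_add_eq_add.2 <|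
        (add_comm _ _).trans ((h l).sum_add_sum_rowRemainder hm).symm]
    simp only [Finset.sum_const, Finset.card_range, nsmul_eq_mul]
  refine sub_eq_zero.1 (eq_zero_of_forall_natCast_mul_norm_le (B := N * C + Fintype.card ι * C)
    fun n ↦ ?_)
  calc n * ‖∑ i, m (p i) - N * m K‖ = ‖(n : ℂ) * (∑ i, m (p i) - N * m K)‖ := by simp
    _ ≤ ∑ _j : Fin N, C + ∑ _i : ι, C := by
      rw [hdefect]
      refine (norm_sub_le _ _).trans (add_le_add (norm_sum_le_of_le _ fun j _ ↦ ?_)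
        (norm_sum_le_of_le _ fun i _ ↦ ?_))
      · exact norm_sum_le_of_orthogonal_rooms hs hm
          (fun l ↦ (h l).isStarProjection_columnRemainder j)
          (fun l ↦ (h l).columnRemainder_mul_room j) n
      · exact norm_sum_le_of_orthogonal_rooms hs hm
          (fun l ↦ (h l).isStarProjection_rowRemainder i)
          (fun l ↦ (h l).rowRemainder_mul_room i) n
    _ = N * C + Fintype.card ι * C := by simp

end Swindle

section Cuntz

variable {A : Type*} [Ring A] [StarRing A]

/-- Two isometries generating a copy of the Cuntz algebra `𝒪₂`: their ranges are orthogonal and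
together exhaust the space. -/
structure IsCuntzPair (V₁ V₂ : A) : Prop where
  star_mul_self_left : star V₁ * V₁ = 1
  star_mul_self_right : star V₂ * V₂ = 1
  star_left_mul_right : star V₁ * V₂ = 0
  mul_star_add : V₁ * star V₁ + V₂ * star V₂ = 1

theorem IsCuntzPair.star_right_mul_left {V₁ V₂ : A} (h : IsCuntzPair V₁ V₂) : star V₂ * V₁ = 0 :=
  star_mul_eq_zero_comm.1 h.star_left_mul_right

theorem IsCuntzPair.orthonormal_pow_mul {V₁ V₂ : A} (h : IsCuntzPair V₁ V₂) (k l : ℕ) :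
    star (V₂ ^ k * V₁) * (V₂ ^ l * V₁) = if k = l then 1 else 0 := by
  induction k generalizing l with
  | zero =>
    cases l with
    | zero => simp [h.star_mul_self_left]
    | succ l => simp [pow_succ', ← mul_assoc, h.star_left_mul_right]
  | succ k ih =>
    cases l with
    | zero => simp [pow_succ', mul_assoc, h.star_right_mul_left]
    | succ l =>
      calc star (V₂ ^ (k + 1) * V₁) * (V₂ ^ (l + 1) * V₁) =
            star (V₂ ^ k * V₁) * (star V₂ * V₂) * (V₂ ^ l * V₁) := by
            simp only [pow_succ', star_mul, mul_assoc]
        _ = if k + 1 = l + 1 then 1 else 0 := by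
            rw [h.star_mul_self_right, mul_one, ih]; simp

variable {V₁ V₂ r : A} {m : A → ℂ} {C : ℝ}

theorem one_sub_mul_star_self_mul (hr : star r * r = 1) : (1 - r * star r) * r = 0 := by
  rw [sub_mul, mul_assoc, hr, one_mul, mul_one, sub_self]

theorem mul_one_sub_mul_star_self {p : A} (hpr : p * r = 0) : p * (1 - r * star r) = p := by
  rw [mul_sub, ← mul_assoc, hpr, zero_mul, mul_one, sub_zero]

theorem isStarProjection_one_sub_mul_star (hr : star r * r = 1) :
    IsStarProjection (1 - r * star r) :=
  (isStarProjection_mul_star_of_isometry hr).one_sub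

variable [Algebra ℂ A] [StarModule ℂ A]

theorem sum_map_eq_mul_of_isometry (h : IsCuntzPair V₁ V₂) (hr : star r * r = 1)
    (hm : IsProjectionMeasure m C) {ι : Type*} [Fintype ι] {N : ℕ} (hN : 2 ≤ N) {p : ι → A}
    (hp : ∀ i, IsStarProjection (p i)) (hpr : ∀ i, p i * r = 0)
    (hsum : ∑ i, p i = (N : ℂ) • (1 - r * star r)) :
    ∑ i, m (p i) = N * m (1 - r * star r) := by
  classical
  let room (l : ℕ) (a : ι × Fin N) : A :=
    r * (V₂ ^ Nat.pair l (Fintype.equivFin _ a) * V₁)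
  have hroom k l a b : star (room k a) * room l b = if k = l ∧ a = b then 1 else 0 := by
    calc star (room k a) * room l b =
          star (V₂ ^ Nat.pair k (Fintype.equivFin _ a) * V₁) * (star r * r) *
            (V₂ ^ Nat.pair l (Fintype.equivFin _ b) * V₁) := by
          simp only [room, star_mul, mul_assoc]
      _ = if k = l ∧ a = b then 1 else 0 := by
          simp only [hr, mul_one, h.orthonormal_pow_mul, Nat.pair_eq_pair, Fin.val_inj,
            EmbeddingLike.apply_eq_iff_eq]
  refine IsDilatable.sum_map_eq (s := room) (fun l ↦ ?_) (fun k l hkl a b ↦ ?_) hm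
  · exact
      { two_le := hN
        proj := hp
        proj_top := isStarProjection_one_sub_mul_star hr
        mul_top := fun i ↦ mul_one_sub_mul_star_self (hpr i)
        sum_eq := hsum
        orthonormal := fun a b ↦ by simp [hroom]
        top_mul_room := fun a ↦ by rw [← mul_assoc, one_sub_mul_star_self_mul hr, zero_mul] }
  · rw [hroom, if_neg fun hkl' ↦ hkl hkl'.1]

theorem multiset_sum_map_eq_mul_of_isometry (h : IsCuntzPair V₁ V₂) (hr : star r * r = 1)
    (hm : IsProjectionMeasure m C) (N : ℕ) {s : Multiset A}
    (hs : ∀ p ∈ s, IsStarProjection p ∧ p * r = 0)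
    (hsum : s.sum = (N : ℂ) • (1 - r * star r)) :
    (s.map m).sum = N * m (1 - r * star r) := by
  classical
  set K := 1 - r * star r
  have hK : IsStarProjection K ∧ K * r = 0 :=
    ⟨isStarProjection_one_sub_mul_star hr, one_sub_mul_star_self_mul hr⟩
  -- Two additional copies of `K` on both sides make the multiplicity at least `2`.
  let s' := s + Multiset.replicate 2 K
  have hs' (p : s'.ToType) : IsStarProjection p.1 ∧ p.1 * r = 0 := by
    rcases Multiset.mem_add.1 (Multiset.coe_mem (x := p)) with hp | hp
    · exact hs _ hp
    · rwa [Multiset.eq_of_mem_replicate hp]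
  have hsum' : ∑ p : s'.ToType, p.1 = ((N + 2 : ℕ) : ℂ) • K := by
    rw [← Multiset.sum_eq_sum_coe, Multiset.sum_add, hsum, Multiset.sum_replicate]
    push_cast
    module
  have key := sum_map_eq_mul_of_isometry h hr hm (Nat.le_add_left 2 N) (fun p ↦ (hs' p).1)
    (fun p ↦ (hs' p).2) hsum'
  rw [Finset.sum, Multiset.map_univ s' m, Multiset.map_add, Multiset.sum_add,
    Multiset.map_replicate, Multiset.sum_replicate] at key
  push_cast at key
  linear_combination key

theorem sum_map_eq_sum_map_of_isometry (h : IsCuntzPair V₁ V₂) (hr : star r * r = 1)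
    (hm : IsProjectionMeasure m C) {s t : Multiset A}
    (hs : ∀ p ∈ s, IsStarProjection p ∧ p * r = 0)
    (ht : ∀ p ∈ t, IsStarProjection p ∧ p * r = 0) (hst : s.sum = t.sum) :
    (s.map m).sum = (t.map m).sum := by
  set K := 1 - r * star r with K_def
  have hKproj : IsStarProjection K := isStarProjection_one_sub_mul_star hr
  have hKt (q) (hq : q ∈ t) : K * q = q :=
    mul_eq_self_of_isSelfAdjoint (ht q hq).1.isSelfAdjoint hKproj.isSelfAdjoint
      (mul_one_sub_mul_star_self (ht q hq).2)
  have hcompl (q) (hq : q ∈ t) : IsStarProjection (K - q) ∧ (K - q) * r = 0 :=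
    ⟨(ht q hq).1.sub_of_mul_eq_right hKproj (hKt q hq), by
      rw [sub_mul, one_sub_mul_star_self_mul hr, (ht q hq).2, sub_zero]⟩
  have key := multiset_sum_map_eq_mul_of_isometry h hr hm t.card (s := s + t.map (K - ·)) ?_ ?_
  · have hmap : ((t.map (K - ·)).map m).sum = t.card * m K - (t.map m).sum := by
      simp only [Multiset.map_map, Function.comp_apply]
      rw [Multiset.map_congr rfl fun q hq ↦ hm.map_sub hKproj (ht q hq).1 (hKt q hq),
        Multiset.sum_map_sub]
      simp
    rw [Multiset.map_add, Multiset.sum_add, hmap] at key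
    linear_combination key
  · intro p hp
    rcases Multiset.mem_add.1 hp with hp | hp
    · exact hs p hp
    · obtain ⟨q, hq, rfl⟩ := Multiset.mem_map.1 hp
      exact hcompl q hq
  · rw [Multiset.sum_add, Multiset.sum_map_sub, hst]
    simp [Nat.cast_smul_eq_nsmul, K_def]

end Cuntz

section Halmos

theorem isStarProjection_half_add {A : Type*} [Ring A] [StarRing A] [Algebra ℂ A] [StarModule ℂ A]
    {e s : A} (he : IsStarProjection e) (hs : IsSelfAdjoint s) (hss : s * s = e)
    (hes : e * s = s) : IsStarProjection ((1 / 2 : ℂ) • (e + s)) where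
  isIdempotentElem := by
    have hse : s * e = s := by
      simpa [hs.star_eq, he.isSelfAdjoint.star_eq] using congr(star $hes)
    rw [IsIdempotentElem, smul_mul_smul_comm, add_mul, mul_add, mul_add, he.isIdempotentElem.eq,
      hes, hse, hss]
    module
  isSelfAdjoint := by
    rw [isSelfAdjoint_iff, star_smul, star_add, he.isSelfAdjoint.star_eq, hs.star_eq]
    simp

/-- Two partial isometries with common initial projection `z` and orthogonal final projections. -/
structure IsOrthogonalPair {A : Type*} [Ring A] [StarRing A] (z g h : A) : Prop where
  proj : IsStarProjection z
  star_left_mul_left : star g * g = z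
  star_right_mul_right : star h * h = z
  left_mul : g * z = g
  right_mul : h * z = h
  star_left_mul_right : star g * h = 0

theorem isOrthogonalPair_one {A : Type*} [Ring A] [StarRing A] {g h : A} (hg : star g * g = 1)
    (hh : star h * h = 1) (hgh : star g * h = 0) : IsOrthogonalPair 1 g h :=
  ⟨.one A, hg, hh, mul_one g, mul_one h, hgh⟩

/-- The Halmos symmetry `[[a, t], [t, -a]]`, with `t² = z - a²`, in the matrix units given by an
orthogonal pair `g`, `h`. -/
def halmosSymmetry {A : Type*} [Ring A] [StarRing A] (g h a t : A) : A :=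
  g * a * star g + g * t * star h + h * t * star g - h * a * star h

theorem isSelfAdjoint_halmosSymmetry {A : Type*} [Ring A] [StarRing A] {a t : A} (g h : A)
    (ha : IsSelfAdjoint a) (ht : IsSelfAdjoint t) : IsSelfAdjoint (halmosSymmetry g h a t) := by
  simp only [isSelfAdjoint_iff, halmosSymmetry, star_sub, star_add, star_mul, star_star,
    ha.star_eq, ht.star_eq, mul_assoc]
  abel

namespace IsOrthogonalPair

section Ring

variable {A : Type*} [Ring A] [StarRing A] {z g h a t : A}

theorem star_right_mul_left (H : IsOrthogonalPair z g h) : star h * g = 0 :=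
  star_mul_eq_zero_comm.1 H.star_left_mul_right

theorem isStarProjection_range (H : IsOrthogonalPair z g h) :
    IsStarProjection (g * star g + h * star h) :=
  (isStarProjection_mul_star_self H.star_left_mul_left H.left_mul).add
    (isStarProjection_mul_star_self H.star_right_mul_right H.right_mul) <| by
      rw [mul_assoc, ← mul_assoc (star g), H.star_left_mul_right, zero_mul, mul_zero]

theorem star_left_mul_symmetry (H : IsOrthogonalPair z g h) (hza : z * a = a) (hzt : z * t = t) :
    star g * halmosSymmetry g h a t = a * star g + t * star h := by
  simp only [halmosSymmetry, mul_add, mul_sub, ← mul_assoc, H.star_left_mul_left,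
    H.star_left_mul_right, hza, hzt, zero_mul, add_zero, sub_zero]

theorem star_right_mul_symmetry (H : IsOrthogonalPair z g h) (hza : z * a = a)
    (hzt : z * t = t) : star h * halmosSymmetry g h a t = t * star g - a * star h := by
  simp only [halmosSymmetry, mul_add, mul_sub, ← mul_assoc, H.star_right_mul_left,
    H.star_right_mul_right, hza, hzt, zero_mul, zero_add]

theorem range_mul_symmetry (H : IsOrthogonalPair z g h) (hza : z * a = a) (hzt : z * t = t) :
    (g * star g + h * star h) * halmosSymmetry g h a t = halmosSymmetry g h a t := by
  rw [add_mul, mul_assoc, mul_assoc, H.star_left_mul_symmetry hza hzt,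
    H.star_right_mul_symmetry hza hzt, halmosSymmetry]
  simp only [mul_add, mul_sub, mul_assoc]
  abel

theorem symmetry_mul_self (H : IsOrthogonalPair z g h) (hza : z * a = a) (hzt : z * t = t)
    (hcomm : t * a = a * t) (htt : t * t = z - a * a) :
    halmosSymmetry g h a t * halmosSymmetry g h a t = g * star g + h * star h := by
  have hsq : a * a + t * t = z := by rw [htt, add_sub_cancel]
  calc halmosSymmetry g h a t * halmosSymmetry g h a t
      = g * (a * (a * star g + t * star h) + t * (t * star g - a * star h)) +
          h * (t * (a * star g + t * star h) - a * (t * star g - a * star h)) := by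
        nth_rewrite 1 [halmosSymmetry]
        simp only [add_mul, sub_mul, mul_assoc, H.star_left_mul_symmetry hza hzt,
          H.star_right_mul_symmetry hza hzt]
        noncomm_ring
    _ = g * ((a * a + t * t) * star g) + h * ((a * a + t * t) * star h) := by
        simp only [mul_add, mul_sub, add_mul, ← mul_assoc, hcomm]
        simp only [mul_assoc]
        noncomm_ring
    _ = g * star g + h * star h := by
        rw [hsq, ← mul_assoc, ← mul_assoc, H.left_mul, H.right_mul]

theorem isStarProjection_half_add_symmetry [Algebra ℂ A] [StarModule ℂ A]
    (H : IsOrthogonalPair z g h) (ha : IsSelfAdjoint a) (ht : IsSelfAdjoint t) (hza : z * a = a)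
    (hzt : z * t = t) (hcomm : t * a = a * t) (htt : t * t = z - a * a) :
    IsStarProjection ((1 / 2 : ℂ) • (g * star g + h * star h + halmosSymmetry g h a t)) :=
  isStarProjection_half_add H.isStarProjection_range (isSelfAdjoint_halmosSymmetry g h ha ht)
    (H.symmetry_mul_self hza hzt hcomm htt) (H.range_mul_symmetry hza hzt)

end Ring

end IsOrthogonalPair

section CStarAlgebra

variable {A : Type*} [CStarAlgebra A] {a z g h : A}

theorem exists_sqrt_one_sub_sq (ha : IsSelfAdjoint a) (ha1 : ‖a‖ ≤ 1) :
    ∃ s : A, IsSelfAdjoint s ∧ s * s = 1 - a * a ∧ ∀ b, Commute a b → Commute s b := by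
  obtain _ | _ := subsingleton_or_nontrivial A
  · exact ⟨0, .zero A, Subsingleton.elim _ _, fun b _ ↦ .zero_left b⟩
  refine ⟨cfc (fun x : ℝ ↦ √(1 - x ^ 2)) a, cfc_predicate _ a, ?_, fun b hb ↦ hb.cfc_real _⟩
  have hsub : 1 - a * a = cfc (fun x : ℝ ↦ 1 - x ^ 2) a := by
    rw [cfc_sub .., cfc_pow .., cfc_const_one .., cfc_id' .., sq]
  rw [hsub, ← cfc_mul ..]
  refine cfc_congr fun x hx ↦ Real.mul_self_sqrt (sub_nonneg.2 ?_)
  exact (sq_le_one_iff_abs_le_one x).2 ((spectrum.norm_le_norm_of_mem hx).trans ha1)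

theorem exists_sqrt_sub_sq (ha : IsSelfAdjoint a) (ha1 : ‖a‖ ≤ 1) (hz : IsStarProjection z)
    (haz : a * z = a) :
    ∃ t : A, IsSelfAdjoint t ∧ t * t = z - a * a ∧ t * a = a * t ∧ z * t = t := by
  have hza : z * a = a := mul_eq_self_of_isSelfAdjoint ha hz.isSelfAdjoint haz
  obtain ⟨s, hs, hss, hcomm⟩ := exists_sqrt_one_sub_sq ha ha1
  have hsa : Commute s a := hcomm a (.refl a)
  have hsz : Commute s z := hcomm z (haz.trans hza.symm)
  have hzz : z * z = z := hz.isIdempotentElem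
  refine ⟨s * z, (hs.commute_iff hz.isSelfAdjoint).1 hsz, ?_, ?_, ?_⟩
  · calc s * z * (s * z) = s * s * (z * z) := hsz.symm.mul_mul_mul_comm s z
      _ = z - a * a := by rw [hss, hzz, sub_mul, one_mul, mul_assoc, haz]
  · rw [mul_assoc, hza, hsa.eq, hsz.eq, ← mul_assoc, haz]
  · rw [hsz.eq, ← mul_assoc, hzz]

/-- The two Halmos projections of `a` differ in the sign of the off-diagonal entries, which cancel
in their sum. -/
theorem IsOrthogonalPair.exists_halmos (H : IsOrthogonalPair z g h) (ha : IsSelfAdjoint a)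
    (ha1 : ‖a‖ ≤ 1) (haz : a * z = a) :
    ∃ p q : A, IsStarProjection p ∧ IsStarProjection q ∧
      g * a * star g - h * a * star h = p + q - (g * star g + h * star h) ∧
      ∀ r, star g * r = 0 → star h * r = 0 → p * r = 0 ∧ q * r = 0 := by
  have hza : z * a = a := mul_eq_self_of_isSelfAdjoint ha H.proj.isSelfAdjoint haz
  obtain ⟨t, ht, htt, hta, hzt⟩ := exists_sqrt_sub_sq ha ha1 H.proj haz
  refine ⟨_, _, H.isStarProjection_half_add_symmetry ha ht hza hzt hta htt,
    H.isStarProjection_half_add_symmetry (t := -t) ha ht.neg hza (by rw [mul_neg, hzt])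
      (by rw [neg_mul, mul_neg, hta]) (by rw [neg_mul_neg, htt]), ?_, fun r hg hh ↦ ?_⟩
  · simp only [halmosSymmetry, mul_neg, neg_mul]
    module
  · simp only [halmosSymmetry, smul_mul_assoc, add_mul, sub_mul, mul_assoc, hg, hh, mul_zero,
      add_zero, sub_zero, smul_zero, and_self]

end CStarAlgebra

end Halmos

section ProjectionDifference

/-- `x` is a difference of two sums of at most `n` projections each. -/
def IsProjectionDifference {A : Type*} [Ring A] [StarRing A] (x : A) (n : ℕ) : Prop :=
  ∃ s t : Multiset A, (∀ p ∈ s, IsStarProjection p) ∧ (∀ p ∈ t, IsStarProjection p) ∧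
    x = s.sum - t.sum ∧ s.card ≤ n ∧ t.card ≤ n

namespace IsProjectionDifference

variable {A : Type*} [Ring A] [StarRing A] {x y : A} {n k : ℕ}

theorem add (hx : IsProjectionDifference x n) (hy : IsProjectionDifference y k) :
    IsProjectionDifference (x + y) (n + k) := by
  obtain ⟨s, t, hs, ht, rfl, hsn, htn⟩ := hx
  obtain ⟨s', t', hs', ht', rfl, hsk, htk⟩ := hy
  refine ⟨s + s', t + t', fun p hp ↦ (Multiset.mem_add.1 hp).elim (hs p) (hs' p),
    fun p hp ↦ (Multiset.mem_add.1 hp).elim (ht p) (ht' p), ?_, ?_, ?_⟩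
  · rw [Multiset.sum_add, Multiset.sum_add]
    abel
  · rw [Multiset.card_add]
    exact add_le_add hsn hsk
  · rw [Multiset.card_add]
    exact add_le_add htn htk

theorem neg (hx : IsProjectionDifference x n) : IsProjectionDifference (-x) n := by
  obtain ⟨s, t, hs, ht, rfl, hsn, htn⟩ := hx
  exact ⟨t, s, ht, hs, neg_sub _ _, htn, hsn⟩

theorem sub (hx : IsProjectionDifference x n) (hy : IsProjectionDifference y k) :
    IsProjectionDifference (x - y) (n + k) :=
  sub_eq_add_neg x y ▸ hx.add hy.neg

end IsProjectionDifference

section Join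

variable {A : Type*} [Ring A] [StarRing A] {V₁ V₂ f g c : A}

theorem star_mul_mul_mul_of_isometry (hc : star c * c = 1) (f g : A) :
    star (c * f) * (c * g) = star f * g := by
  rw [star_mul, mul_assoc, ← mul_assoc (star c), hc, one_mul]

/-- The isometry `(f, g) ∘ (V₁, V₂)⁻¹` whose range is the sum of the ranges of the isometries `f`
and `g`. -/
def cuntzJoin (V₁ V₂ f g : A) : A := f * star V₁ + g * star V₂

namespace IsCuntzPair

theorem cuntzJoin_mul_left (H : IsCuntzPair V₁ V₂) (f g : A) : cuntzJoin V₁ V₂ f g * V₁ = f := by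
  rw [cuntzJoin, add_mul, mul_assoc, mul_assoc, H.star_mul_self_left, H.star_right_mul_left,
    mul_one, mul_zero, add_zero]

theorem cuntzJoin_mul_right (H : IsCuntzPair V₁ V₂) (f g : A) : cuntzJoin V₁ V₂ f g * V₂ = g := by
  rw [cuntzJoin, add_mul, mul_assoc, mul_assoc, H.star_mul_self_right, H.star_left_mul_right,
    mul_one, mul_zero, zero_add]

theorem cuntzJoin_mul_star (H : IsCuntzPair V₁ V₂) (f g : A) :
    cuntzJoin V₁ V₂ f g * star (cuntzJoin V₁ V₂ f g) = f * star f + g * star g := by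
  nth_rewrite 2 [cuntzJoin]
  simp only [star_add, star_mul, star_star, mul_add, ← mul_assoc, H.cuntzJoin_mul_left,
    H.cuntzJoin_mul_right]

theorem star_cuntzJoin_mul_self (H : IsCuntzPair V₁ V₂) (hf : star f * f = 1)
    (hg : star g * g = 1) (hfg : star f * g = 0) :
    star (cuntzJoin V₁ V₂ f g) * cuntzJoin V₁ V₂ f g = 1 := by
  have hgf : star g * f = 0 := star_mul_eq_zero_comm.1 hfg
  have hfJ : star f * cuntzJoin V₁ V₂ f g = star V₁ := by
    rw [cuntzJoin, mul_add, ← mul_assoc, ← mul_assoc, hf, hfg, one_mul, zero_mul, add_zero]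
  have hgJ : star g * cuntzJoin V₁ V₂ f g = star V₂ := by
    rw [cuntzJoin, mul_add, ← mul_assoc, ← mul_assoc, hg, hgf, one_mul, zero_mul, zero_add]
  nth_rewrite 1 [cuntzJoin]
  rw [star_add, star_mul, star_mul, star_star, star_star, add_mul, mul_assoc, mul_assoc, hfJ, hgJ,
    H.mul_star_add]

end IsCuntzPair

theorem star_cuntzJoin_mul_eq_zero (hf : star f * c = 0) (hg : star g * c = 0) :
    star (cuntzJoin V₁ V₂ f g) * c = 0 := by
  rw [cuntzJoin, star_add, star_mul, star_mul, star_star, star_star, add_mul, mul_assoc, mul_assoc,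
    hf, hg, mul_zero, mul_zero, add_zero]

end Join

section CStarAlgebra

variable {A : Type*} [CStarAlgebra A] {V₁ V₂ f g h c x y : A}

/-- A Cuntz pair for which every self-adjoint `y` has an infinite ampliation
`t = ∑ₙ V₂ⁿ V₁ y (V₂ⁿ V₁)*`, characterised by its self-similarity. -/
structure IsAmpliatingPair (V₁ V₂ : A) : Prop extends IsCuntzPair V₁ V₂ where
  exists_ampliation : ∀ y : A, IsSelfAdjoint y → ∃ t : A, IsSelfAdjoint t ∧ ‖t‖ ≤ ‖y‖ ∧
    t = V₁ * y * star V₁ + V₂ * t * star V₂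

theorem isProjectionDifference_conj_sub_conj (hy : IsSelfAdjoint y) (hy1 : ‖y‖ ≤ 1)
    (hg : star g * g = 1) (hh : star h * h = 1) (hgh : star g * h = 0) :
    IsProjectionDifference (g * y * star g - h * y * star h) 2 := by
  obtain ⟨p, q, hp, hq, hpq, -⟩ :=
    (isOrthogonalPair_one hg hh hgh).exists_halmos hy hy1 (mul_one y)
  refine ⟨{p, q}, {g * star g, h * star h}, ?_, ?_, ?_, by simp, by simp⟩
  · simp [hp, hq]
  · simp [isStarProjection_mul_star_of_isometry hg, isStarProjection_mul_star_of_isometry hh]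
  · simp [hpq]

theorem norm_le_one_of_isometry (hg : star g * g = 1) : ‖g‖ ≤ 1 := by
  obtain _ | _ := subsingleton_or_nontrivial A
  · simp [Subsingleton.elim g 0]
  · refine (sq_le_one_iff₀ (norm_nonneg g)).1 ?_
    rw [sq, ← CStarRing.norm_star_mul_self, hg, norm_one]

theorem norm_star_mul_mul_le_of_isometry (hg : star g * g = 1) (x : A) : ‖star g * x * g‖ ≤ ‖x‖ :=
  calc ‖star g * x * g‖ ≤ ‖star g‖ * ‖x‖ * ‖g‖ := norm_mul₃_le
    _ ≤ 1 * ‖x‖ * 1 := by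
      rw [norm_star]
      gcongr <;> exact norm_le_one_of_isometry hg
    _ = ‖x‖ := by rw [one_mul, mul_one]

namespace IsAmpliatingPair

/-- With `t` the ampliation of `y` and `h` the join of `g` and `c V₁`, conjugation by `h` gives
`g y g* + (c V₁) t (c V₁)*`, so `g y g*` is the sum of the two differences of conjugates of `t`
by the isometries `h`, `c V₂` and `c V₂`, `c V₁`. -/
theorem isProjectionDifference_conj (H : IsAmpliatingPair V₁ V₂) (hy : IsSelfAdjoint y)
    (hy1 : ‖y‖ ≤ 1) (hg : star g * g = 1) (hc : star c * c = 1) (hgc : star g * c = 0) :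
    IsProjectionDifference (g * y * star g) 4 := by
  obtain ⟨t, ht, hty, hself⟩ := H.exists_ampliation y hy
  have hc₁ : star (c * V₁) * (c * V₁) = 1 := by
    rw [star_mul_mul_mul_of_isometry hc, H.star_mul_self_left]
  have hc₂ : star (c * V₂) * (c * V₂) = 1 := by
    rw [star_mul_mul_mul_of_isometry hc, H.star_mul_self_right]
  have hc₁₂ : star (c * V₁) * (c * V₂) = 0 := by
    rw [star_mul_mul_mul_of_isometry hc, H.star_left_mul_right]
  have hg₁ : star g * (c * V₁) = 0 := by rw [← mul_assoc, hgc, zero_mul]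
  have hg₂ : star g * (c * V₂) = 0 := by rw [← mul_assoc, hgc, zero_mul]
  set h := cuntzJoin V₁ V₂ g (c * V₁) with hh
  have hconj : h * t * star h = g * y * star g + c * V₁ * t * star (c * V₁) := by
    nth_rewrite 1 [hself]
    have h₁ : h * V₁ = g := H.cuntzJoin_mul_left g _
    have h₂ : h * V₂ = c * V₁ := H.cuntzJoin_mul_right g _
    simp only [← h₂, ← h₁, star_mul, mul_add, add_mul, mul_assoc]
  have hfirst := isProjectionDifference_conj_sub_conj ht (hty.trans hy1)
    (H.star_cuntzJoin_mul_self hg hc₁ hg₁) hc₂ (star_cuntzJoin_mul_eq_zero hg₂ hc₁₂)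
  have hsecond := isProjectionDifference_conj_sub_conj ht (hty.trans hy1) hc₂ hc₁
    (star_mul_eq_zero_comm.1 hc₁₂)
  convert hfirst.add hsecond using 1
  rw [← hh, hconj]
  abel

theorem isProjectionDifference_corner (H : IsAmpliatingPair V₁ V₂) (hx : IsSelfAdjoint x)
    (hx1 : ‖x‖ ≤ 1) (hg : star g * g = 1) (hc : star c * c = 1) (hgc : star g * c = 0) :
    IsProjectionDifference (g * star g * x * (g * star g)) 4 := by
  simpa only [mul_assoc] using H.isProjectionDifference_conj (hx.conjugate' g)
    ((norm_star_mul_mul_le_of_isometry hg x).trans hx1) hg hc hgc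

theorem isProjectionDifference_corner_add (H : IsAmpliatingPair V₁ V₂) (hx : IsSelfAdjoint x)
    (hx1 : ‖x‖ ≤ 1) (hf : star f * f = 1) (hg : star g * g = 1) (hc : star c * c = 1)
    (hfg : star f * g = 0) (hfc : star f * c = 0) (hgc : star g * c = 0) :
    IsProjectionDifference ((f * star f + g * star g) * x * (f * star f + g * star g)) 4 := by
  simpa only [H.cuntzJoin_mul_star] using H.isProjectionDifference_corner hx hx1
    (H.star_cuntzJoin_mul_self hf hg hfg) hc (star_cuntzJoin_mul_eq_zero hfc hgc)

/-- The range projections of `V₁`, `V₂ V₁` and `V₂ V₂` add up to `1`, and `x` is the sum of its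
compressions to pairs of them minus the compressions to each of them. Every such compression leaves
room for an infinite ampliation. -/
theorem isProjectionDifference (H : IsAmpliatingPair V₁ V₂) (hx : IsSelfAdjoint x)
    (hx1 : ‖x‖ ≤ 1) : IsProjectionDifference x 24 := by
  set f := V₂ * V₁
  set g := V₂ * V₂
  have hV := H.star_mul_self_left
  have hf : star f * f = 1 := by
    rw [star_mul_mul_mul_of_isometry H.star_mul_self_right, hV]
  have hg : star g * g = 1 := by
    rw [star_mul_mul_mul_of_isometry H.star_mul_self_right, H.star_mul_self_right]
  have hVf : star V₁ * f = 0 := by rw [← mul_assoc, H.star_left_mul_right, zero_mul]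
  have hVg : star V₁ * g = 0 := by rw [← mul_assoc, H.star_left_mul_right, zero_mul]
  have hfg : star f * g = 0 := by
    rw [star_mul_mul_mul_of_isometry H.star_mul_self_right, H.star_left_mul_right]
  have hfV := star_mul_eq_zero_comm.1 hVf
  have hgV := star_mul_eq_zero_comm.1 hVg
  have hgf := star_mul_eq_zero_comm.1 hfg
  have hsum : V₁ * star V₁ + (f * star f + g * star g) = 1 := by
    rw [star_mul, star_mul, mul_assoc, mul_assoc, ← mul_add, ← mul_assoc, ← mul_assoc V₂, ← add_mul,
      H.mul_star_add, one_mul, H.mul_star_add]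
  have hpairs := ((H.isProjectionDifference_corner_add hx hx1 hV hf hg hVf hVg hfg).add
    (H.isProjectionDifference_corner_add hx hx1 hV hg hf hVg hVf hgf)).add
    (H.isProjectionDifference_corner_add hx hx1 hf hg hV hfg hfV hgV)
  have hsingles := ((H.isProjectionDifference_corner hx hx1 hV hf hVf).add
    (H.isProjectionDifference_corner hx hx1 hf hV hfV)).add
    (H.isProjectionDifference_corner hx hx1 hg hV hgV)
  convert hpairs.sub hsingles using 1
  calc x = (V₁ * star V₁ + (f * star f + g * star g)) * x *
        (V₁ * star V₁ + (f * star f + g * star g)) := by rw [hsum, one_mul, mul_one]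
    _ = _ := by noncomm_ring

end IsAmpliatingPair

end CStarAlgebra

end ProjectionDifference

section Gluing

theorem exists_norm_inv_natCast_smul_le_one {X : Type*} [NormedAddCommGroup X] [NormedSpace ℝ X]
    (x : X) : ∃ n : ℕ, (n : ℝ) ≠ 0 ∧ ‖(n : ℝ)⁻¹ • x‖ ≤ 1 := by
  obtain ⟨n, hn⟩ := exists_nat_gt ‖x‖
  have hn0 : (0 : ℝ) < n := (norm_nonneg x).trans_lt hn
  refine ⟨n, hn0.ne', ?_⟩
  rw [norm_smul, norm_inv, RCLike.norm_natCast, inv_mul_le_iff₀ hn0, mul_one]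
  exact hn.le

section CStarAlgebra

variable {A : Type*} [CStarAlgebra A] {v v' w x z : A}

theorem exists_sub_conj_eq_of_norm_le_one (hx : IsSelfAdjoint x) (hx1 : ‖x‖ ≤ 1)
    (hz : IsStarProjection z) (hxz : x * z = x) (hw : star w * w = 1) (hzw : z * w = 0) :
    ∃ s t : Multiset A, x - w * x * star w = s.sum - t.sum ∧
      ∀ p ∈ s + t, IsStarProjection p ∧ ∀ r, z * r = 0 → star w * r = 0 → p * r = 0 := by
  have hzx : z * x = x := mul_eq_self_of_isSelfAdjoint hx hz.isSelfAdjoint hxz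
  have hzs : star z = z := hz.isSelfAdjoint
  have hzz : z * z = z := hz.isIdempotentElem
  have hpair : IsOrthogonalPair z z (w * z) :=
    ⟨hz, by rw [hzs, hzz], by rw [star_mul_mul_mul_of_isometry hw, hzs, hzz], hzz,
      by rw [mul_assoc, hzz], by rw [hzs, ← mul_assoc, hzw, zero_mul]⟩
  obtain ⟨p, q, hp, hq, hsum, hker⟩ := hpair.exists_halmos hx hx1 hxz
  have hz_conj : w * z * star (w * z) = w * z * star w := by
    rw [star_mul, hzs, ← mul_assoc, mul_assoc w, hzz]
  have hx_conj : w * z * x * star (w * z) = w * x * star w := by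
    rw [star_mul, hzs, mul_assoc w, hzx, ← mul_assoc, mul_assoc w, hxz]
  have hker' (r : A) (hzr : z * r = 0) (hwr : star w * r = 0) : p * r = 0 ∧ q * r = 0 :=
    hker r (by rw [hzs, hzr]) (by rw [star_mul, mul_assoc, hwr, mul_zero])
  refine ⟨{p, q}, {z, w * z * star w}, ?_, ?_⟩
  · rw [hzs, hzx, hxz, hx_conj, hz_conj, hzz] at hsum
    simpa using hsum
  · simp only [Multiset.insert_eq_cons, Multiset.mem_add, Multiset.mem_cons,
      Multiset.mem_singleton]
    rintro _ ((rfl | rfl) | (rfl | rfl))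
    · exact ⟨hp, fun r hzr hwr ↦ (hker' r hzr hwr).1⟩
    · exact ⟨hq, fun r hzr hwr ↦ (hker' r hzr hwr).2⟩
    · exact ⟨hz, fun r hzr _ ↦ hzr⟩
    · exact ⟨isStarProjection_conj hw hz, fun r _ hwr ↦ by rw [mul_assoc, hwr, mul_zero]⟩

theorem exists_sub_conj_eq (hx : IsSelfAdjoint x) (hz : IsStarProjection z) (hxz : x * z = x)
    (hw : star w * w = 1) (hzw : z * w = 0) :
    ∃ s t : Multiset A, x - w * x * star w = s.sum - t.sum ∧
      ∀ p ∈ s + t, IsStarProjection p ∧ ∀ r, z * r = 0 → star w * r = 0 → p * r = 0 := by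
  obtain ⟨n, hn0, hy1⟩ := exists_norm_inv_natCast_smul_le_one x
  obtain ⟨s, t, hst, hproj⟩ := exists_sub_conj_eq_of_norm_le_one ((IsSelfAdjoint.all _).smul hx)
    hy1 hz (by rw [smul_mul_assoc, hxz]) hw hzw
  refine ⟨n • s, n • t, ?_, fun p hp ↦ hproj p ?_⟩
  · rw [Multiset.sum_nsmul, Multiset.sum_nsmul, ← nsmul_sub, ← hst, mul_smul_comm, smul_mul_assoc,
      ← smul_sub, ← Nat.cast_smul_eq_nsmul ℝ, smul_inv_smul₀ hn0]
  · rw [← nsmul_add] at hp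
    exact Multiset.mem_of_mem_nsmul hp

theorem isSelfAdjoint_multiset_sum {s : Multiset A} (hs : ∀ p ∈ s, IsSelfAdjoint p) :
    IsSelfAdjoint s.sum := by
  induction s using Multiset.induction with
  | empty => simp
  | cons p s ih =>
    rw [Multiset.sum_cons]
    exact (hs p (Multiset.mem_cons_self p s)).add
      (ih fun q hq ↦ hs q (Multiset.mem_cons_of_mem hq))

theorem multiset_sum_mul_eq_zero {s : Multiset A} {r : A} (hs : ∀ p ∈ s, p * r = 0) :
    s.sum * r = 0 := by
  have hsum : (s.map fun p ↦ p * r).sum = s.sum * r := by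
    rw [Multiset.sum_map_mul_right, Multiset.map_id']
  rw [← hsum, Multiset.map_congr rfl hs, Multiset.map_const', Multiset.sum_replicate, smul_zero]

theorem one_sub_add_mul_left (hv : star v * v = 1) (hvv' : star v * v' = 0) :
    (1 - (v * star v + v' * star v')) * v = 0 := by
  rw [sub_mul, add_mul, mul_assoc, mul_assoc, hv, star_mul_eq_zero_comm.1 hvv', mul_one, mul_zero,
    add_zero, one_mul, sub_self]

namespace IsCuntzPair

variable {V₁ V₂ : A}

theorem exists_sub_conj_eq (H : IsCuntzPair V₁ V₂) (hv : star v * v = 1)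
    (hv' : star v' * v' = 1) (hvv' : star v * v' = 0) (hx : IsSelfAdjoint x) (hxv : x * v = 0)
    (hxv' : x * v' = 0) :
    ∃ (w : A) (a b : Multiset A), (star w * w = 1 ∧ star w * (v * V₁) = 0 ∧ star w * v' = 0) ∧
      x - w * x * star w = a.sum - b.sum ∧
      ∀ p ∈ a + b, IsStarProjection p ∧ p * (v * V₁) = 0 ∧ p * v' = 0 := by
  set z := 1 - (v * star v + v' * star v') with hz_def
  have hz : IsStarProjection z := (isOrthogonalPair_one hv hv' hvv').isStarProjection_range.one_sub
  have hzv : z * v = 0 := one_sub_add_mul_left hv hvv'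
  have hzv' : z * v' = 0 := by
    rw [hz_def, add_comm, one_sub_add_mul_left hv' (star_mul_eq_zero_comm.1 hvv')]
  have hxz : x * z = x := by
    rw [hz_def, mul_sub, mul_add, ← mul_assoc, ← mul_assoc, hxv, hxv', zero_mul, zero_mul,
      add_zero, sub_zero, mul_one]
  have hw : star (v * V₂) * (v * V₂) = 1 := by
    rw [star_mul_mul_mul_of_isometry hv, H.star_mul_self_right]
  have hwr : star (v * V₂) * (v * V₁) = 0 := by
    rw [star_mul_mul_mul_of_isometry hv, H.star_right_mul_left]
  have hwv' : star (v * V₂) * v' = 0 := by rw [star_mul, mul_assoc, hvv', mul_zero]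
  obtain ⟨a, b, hab, hproj⟩ :=
    _root_.exists_sub_conj_eq hx hz hxz hw (by rw [← mul_assoc, hzv, zero_mul])
  exact ⟨v * V₂, a, b, ⟨hw, hwr, hwv'⟩, hab, fun p hp ↦ ⟨(hproj p hp).1,
    (hproj p hp).2 _ (by rw [← mul_assoc, hzv, zero_mul]) hwr, (hproj p hp).2 _ hzv' hwv'⟩⟩

theorem sum_map_sub_sum_map_eq (H : IsCuntzPair V₁ V₂) {m : A → ℂ} {C : ℝ}
    (hm : IsProjectionMeasure m C) {r : A} (hr : star r * r = 1) (hw : star w * w = 1)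
    (hwr : star w * r = 0) {s s' u u' a b : Multiset A}
    (hs : ∀ p ∈ s + s', IsStarProjection p ∧ p * r = 0) (hu : ∀ p ∈ u + u', IsStarProjection p)
    (hab : ∀ p ∈ a + b, IsStarProjection p ∧ p * r = 0) (hsu : s.sum - s'.sum = u.sum - u'.sum)
    (hconj : u.sum - u'.sum - w * (u.sum - u'.sum) * star w = a.sum - b.sum) :
    (s.map m).sum - (s'.map m).sum = (a.map m).sum - (b.map m).sum +
      ((u.map fun p ↦ m (w * p * star w)).sum - (u'.map fun p ↦ m (w * p * star w)).sum) := by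
  have hconj_mem : ∀ p ∈ (u + u').map (fun p ↦ w * p * star w),
      IsStarProjection p ∧ p * r = 0 := by
    simp only [Multiset.mem_map, forall_exists_index, and_imp, forall_apply_eq_imp_iff₂]
    exact fun p hp ↦ ⟨isStarProjection_conj hw (hu p hp), by rw [mul_assoc, hwr, mul_zero]⟩
  have hconj_sum (u : Multiset A) : (u.map fun p ↦ w * p * star w).sum = w * u.sum * star w := by
    rw [Multiset.sum_map_mul_right, Multiset.sum_map_mul_left, Multiset.map_id']
  have key := sum_map_eq_sum_map_of_isometry H hr hm
    (s := s + b + u'.map fun p ↦ w * p * star w) (t := s' + a + u.map fun p ↦ w * p * star w)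
    ?_ ?_ ?_
  · simp only [Multiset.map_add, Multiset.sum_add, Multiset.map_map, Function.comp_def] at key
    linear_combination key
  · rw [Multiset.map_add] at hconj_mem
    simp only [Multiset.mem_add] at hs hab hconj_mem ⊢
    rintro p ((hp | hp) | hp)
    exacts [hs p (.inl hp), hab p (.inr hp), hconj_mem p (.inr hp)]
  · rw [Multiset.map_add] at hconj_mem
    simp only [Multiset.mem_add] at hs hab hconj_mem ⊢
    rintro p ((hp | hp) | hp)
    exacts [hs p (.inr hp), hab p (.inl hp), hconj_mem p (.inl hp)]
  · nth_rewrite 1 [← hsu] at hconj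
    rw [mul_sub, sub_mul, ← hconj_sum, ← hconj_sum] at hconj
    rw [← sub_eq_zero] at hconj ⊢
    rw [← hconj]
    simp only [Multiset.sum_add]
    abel

/-- The element `x = s.sum - s'.sum = t'.sum - t.sum` annihilates both `v` and `v'`. Moving it to
`w x w*`, at the cost of projections which annihilate `v V₁` and `v'`, turns both expressions for
`x` into equalities between sums of projections with a common room. -/
theorem sum_map_add_sum_map_eq (H : IsCuntzPair V₁ V₂) {m : A → ℂ} {C : ℝ}
    (hm : IsProjectionMeasure m C) (hv : star v * v = 1) (hv' : star v' * v' = 1)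
    (hvv' : star v * v' = 0) {s s' t t' : Multiset A}
    (hs : ∀ p ∈ s + s', IsStarProjection p ∧ p * v = 0)
    (ht : ∀ p ∈ t' + t, IsStarProjection p ∧ p * v' = 0)
    (hsum : s.sum + t.sum = s'.sum + t'.sum) :
    (s.map m).sum + (t.map m).sum = (s'.map m).sum + (t'.map m).sum := by
  have hxt : t'.sum - t.sum = s.sum - s'.sum := by
    rw [sub_eq_sub_iff_add_eq_add, hsum, add_comm]
  have hxv : (s.sum - s'.sum) * v = 0 := by
    rw [sub_mul, multiset_sum_mul_eq_zero fun p hp ↦ (hs p (Multiset.mem_add.2 (.inl hp))).2,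
      multiset_sum_mul_eq_zero fun p hp ↦ (hs p (Multiset.mem_add.2 (.inr hp))).2, sub_zero]
  have hxv' : (s.sum - s'.sum) * v' = 0 := by
    rw [← hxt, sub_mul,
      multiset_sum_mul_eq_zero fun p hp ↦ (ht p (Multiset.mem_add.2 (.inl hp))).2,
      multiset_sum_mul_eq_zero fun p hp ↦ (ht p (Multiset.mem_add.2 (.inr hp))).2, sub_zero]
  have hx : IsSelfAdjoint (s.sum - s'.sum) :=
    (isSelfAdjoint_multiset_sum fun p hp ↦
      (hs p (Multiset.mem_add.2 (.inl hp))).1.isSelfAdjoint).sub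
    (isSelfAdjoint_multiset_sum fun p hp ↦
      (hs p (Multiset.mem_add.2 (.inr hp))).1.isSelfAdjoint)
  obtain ⟨w, a, b, ⟨hw, hwr, hwv'⟩, hconj, hab⟩ := H.exists_sub_conj_eq hv hv' hvv' hx hxv hxv'
  have hr : star (v * V₁) * (v * V₁) = 1 := by
    rw [star_mul_mul_mul_of_isometry hv, H.star_mul_self_left]
  have hleft := H.sum_map_sub_sum_map_eq hm hr hw hwr
    (fun p hp ↦ ⟨(hs p hp).1, by rw [← mul_assoc, (hs p hp).2, zero_mul]⟩)
    (fun p hp ↦ (hs p hp).1) (fun p hp ↦ ⟨(hab p hp).1, (hab p hp).2.1⟩) rfl hconj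
  have hright := H.sum_map_sub_sum_map_eq hm hv' hw hwv' ht (fun p hp ↦ (hs p hp).1)
    (fun p hp ↦ ⟨(hab p hp).1, (hab p hp).2.2⟩) hxt hconj
  linear_combination hleft - hright

end IsCuntzPair

/-- For any finitely many elements `x` of `A` there are isometries `v`, `v'` with orthogonal ranges
and `v* x v' = 0`. A projection `x` then splits into parts vanishing on the range of `v` and on that
of `v'`. -/
def HasSeparatingIsometries (A : Type*) [Ring A] [StarRing A] : Prop :=
  ∀ s : Multiset A, ∃ v v' : A, star v * v = 1 ∧ star v' * v' = 1 ∧ star v * v' = 0 ∧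
    ∀ x ∈ s, star v * x * v' = 0

end CStarAlgebra

section Hilbert

variable {H : Type*} [NormedAddCommGroup H] [InnerProductSpace ℂ H] [CompleteSpace H]
  {p v v' : H →L[ℂ] H}

/-- Take the projection onto `range p ⊓ ker v*`. -/
theorem exists_isStarProjection_split (hp : IsStarProjection p) (h : star v * p * v' = 0) :
    ∃ a : H →L[ℂ] H, IsStarProjection a ∧ p * a = a ∧ a * v = 0 ∧ (p - a) * v' = 0 := by
  let U : Submodule ℂ H := LinearMap.ker ((1 - p : H →L[ℂ] H) : H →ₗ[ℂ] H) ⊓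
    LinearMap.ker ((star v : H →L[ℂ] H) : H →ₗ[ℂ] H)
  have hU : IsClosed (U : Set H) := (isClosed_ker (1 - p)).inter (isClosed_ker (star v))
  have : CompleteSpace U := hU.completeSpace_coe
  have hmem (x : H) : x ∈ U ↔ p x = x ∧ star v x = 0 :=
    and_congr (sub_eq_zero.trans eq_comm) Iff.rfl
  have ha : IsStarProjection U.starProjection := isStarProjection_starProjection
  have hpa : p * U.starProjection = U.starProjection :=
    ext fun x ↦ ((hmem _).1 (U.starProjection_apply_mem x)).1
  have hva : star v * U.starProjection = 0 :=
    ext fun x ↦ ((hmem _).1 (U.starProjection_apply_mem x)).2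
  have hrange (x : H) : p (v' x) ∈ U :=
    (hmem _).2 ⟨congr($(hp.isIdempotentElem.eq) (v' x)), congr($h x)⟩
  have hav' : U.starProjection * (p * v') = p * v' :=
    ext fun x ↦ Submodule.starProjection_eq_self_iff.2 (hrange x)
  refine ⟨U.starProjection, ha, hpa, ?_, ?_⟩
  · simpa [ha.isSelfAdjoint.star_eq] using congr(star $hva)
  · have hap : U.starProjection * p = U.starProjection := by
      simpa [hp.isSelfAdjoint.star_eq, ha.isSelfAdjoint.star_eq] using congr(star $hpa)
    rw [sub_mul, ← hav', ← mul_assoc, hap, sub_self]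

theorem exists_multiset_split {s : Multiset (H →L[ℂ] H)}
    (hs : ∀ p ∈ s, IsStarProjection p ∧ star v * p * v' = 0) :
    ∃ a b : Multiset (H →L[ℂ] H), (∀ p ∈ a, IsStarProjection p ∧ p * v = 0) ∧
      (∀ p ∈ b, IsStarProjection p ∧ p * v' = 0) ∧ s.sum = a.sum + b.sum ∧
      ∀ (m : (H →L[ℂ] H) → ℂ) (C : ℝ), IsProjectionMeasure m C →
        (s.map m).sum = (a.map m).sum + (b.map m).sum := by
  induction s using Multiset.induction with
  | empty => exact ⟨0, 0, by simp⟩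
  | cons p s ih =>
    obtain ⟨a, b, ha, hb, hsum, hmap⟩ := ih fun q hq ↦ hs q (Multiset.mem_cons_of_mem hq)
    obtain ⟨hp, hpv⟩ := hs p (Multiset.mem_cons_self p s)
    obtain ⟨q, hq, hpq, hqv, hqv'⟩ := exists_isStarProjection_split hp hpv
    refine ⟨q ::ₘ a, (p - q) ::ₘ b, ?_, ?_, ?_, fun m C hm ↦ ?_⟩
    · simpa [hq, hqv] using ha
    · simpa [hq.sub_of_mul_eq_right hp hpq, hqv'] using hb
    · simp only [Multiset.sum_cons, hsum]
      abel
    · simp only [Multiset.map_cons, Multiset.sum_cons, hmap m C hm, hm.map_sub hp hq hpq]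
      ring

theorem HasSeparatingIsometries.sum_map_eq_sum_map (hsep : HasSeparatingIsometries (H →L[ℂ] H))
    {V₁ V₂ : H →L[ℂ] H} (hV : IsCuntzPair V₁ V₂) {m : (H →L[ℂ] H) → ℂ} {C : ℝ}
    (hm : IsProjectionMeasure m C) {s t : Multiset (H →L[ℂ] H)}
    (hs : ∀ p ∈ s, IsStarProjection p) (ht : ∀ p ∈ t, IsStarProjection p)
    (hst : s.sum = t.sum) : (s.map m).sum = (t.map m).sum := by
  obtain ⟨v, v', hv, hv', hvv', hcorner⟩ := hsep (s + t)
  simp only [Multiset.mem_add] at hcorner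
  obtain ⟨a, b, ha, hb, hs_sum, hs_map⟩ :=
    exists_multiset_split fun p hp ↦ ⟨hs p hp, hcorner p (.inl hp)⟩
  obtain ⟨a', b', ha', hb', ht_sum, ht_map⟩ :=
    exists_multiset_split fun p hp ↦ ⟨ht p hp, hcorner p (.inr hp)⟩
  rw [hs_map m C hm, ht_map m C hm]
  refine hV.sum_map_add_sum_map_eq hm hv hv' hvv'
    (fun p hp ↦ (Multiset.mem_add.1 hp).elim (ha p) (ha' p))
    (fun p hp ↦ (Multiset.mem_add.1 hp).elim (hb' p) (hb p)) ?_
  rw [← hs_sum, ← ht_sum, hst]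

end Hilbert

end Gluing

section Extension

/-- A quantitative form of the Mackey–Gleason property: self-adjoint elements of the unit ball are
differences of sums of at most `n` projections, and bounded finitely additive measures on the
projections respect linear relations among finitely many projections. -/
structure IsGleasonAlgebra (A : Type*) [CStarAlgebra A] (n : ℕ) : Prop where
  isProjectionDifference : ∀ x : A, IsSelfAdjoint x → ‖x‖ ≤ 1 → IsProjectionDifference x n
  sum_map_eq_sum_map : ∀ s t : Multiset A, (∀ p ∈ s, IsStarProjection p) →
    (∀ p ∈ t, IsStarProjection p) → s.sum = t.sum →
    ∀ (m : A → ℂ) (C : ℝ), IsProjectionMeasure m C → (s.map m).sum = (t.map m).sum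

/-- A function on pairs of projections bounded by `C` and orthoadditive in each variable: what is
left of a bounded decoherence functional without hermiticity, positivity and normalisation. Only
the values of `d` at projections are constrained. -/
structure IsProjectionBimeasure {A : Type*} [Ring A] [StarRing A] (d : A → A → ℂ) (C : ℝ) :
    Prop where
  left : ∀ q, IsStarProjection q → IsProjectionMeasure (fun p ↦ d p q) C
  right : ∀ p, IsStarProjection p → IsProjectionMeasure (fun q ↦ d p q) C

variable {A : Type*} [CStarAlgebra A] {m : A → ℂ} {C : ℝ} {n : ℕ}

theorem IsProjectionMeasure.norm_sum_map_sub_le (hm : IsProjectionMeasure m C) {s t : Multiset A}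
    (hs : ∀ p ∈ s, IsStarProjection p) (ht : ∀ p ∈ t, IsStarProjection p) (hsn : s.card ≤ n)
    (htn : t.card ≤ n) : ‖(s.map m).sum - (t.map m).sum‖ ≤ 2 * n * C := by
  have hsum {u : Multiset A} (hu : ∀ p ∈ u, IsStarProjection p) (hun : u.card ≤ n) :
      ‖(u.map m).sum‖ ≤ n * C := by
    refine (norm_multiset_sum_le _).trans ((Multiset.sum_le_card_nsmul _ C ?_).trans ?_)
    · simpa using fun p hp ↦ hm.norm_le p (hu p hp)
    · rw [Multiset.card_map, Multiset.card_map, nsmul_eq_mul]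
      have := hm.bound_nonneg
      gcongr
  linarith [norm_sub_le (s.map m).sum (t.map m).sum, hsum hs hsn, hsum ht htn]

/-- The complexification of a real-linear functional on the self-adjoint part. -/
def complexify (f : selfAdjoint A →ₗ[ℝ] ℂ) : A →ₗ[ℂ] ℂ where
  toFun x := f (realPart x) + Complex.I * f (imaginaryPart x)
  map_add' x y := by
    simp only [map_add]
    ring
  map_smul' c x := by
    simp only [realPart_smul, imaginaryPart_smul, map_sub, map_add, map_smul, RingHom.id_apply,
      Complex.real_smul, smul_eq_mul]
    nth_rewrite 5 [← Complex.re_add_im c]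
    linear_combination (-(c.im : ℂ)) * f (imaginaryPart x) * Complex.I_mul_I

theorem complexify_apply_coe (f : selfAdjoint A →ₗ[ℝ] ℂ) (x : selfAdjoint A) :
    complexify f x = f x := by
  simp [complexify, x.2.imaginaryPart, Subtype.ext x.2.coe_realPart]

theorem norm_complexify_apply_le {f : selfAdjoint A →ₗ[ℝ] ℂ} (hC : 0 ≤ C)
    (hf : ∀ x, ‖f x‖ ≤ C * ‖x‖) (x : A) : ‖complexify f x‖ ≤ 2 * C * ‖x‖ := by
  have hre : ‖f (realPart x)‖ ≤ C * ‖x‖ :=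
    (hf _).trans (mul_le_mul_of_nonneg_left (realPart.norm_le x) hC)
  have him : ‖Complex.I * f (imaginaryPart x)‖ ≤ C * ‖x‖ := by
    rw [norm_mul, Complex.norm_I, one_mul]
    exact (hf _).trans (mul_le_mul_of_nonneg_left (imaginaryPart.norm_le x) hC)
  calc ‖complexify f x‖ ≤ ‖f (realPart x)‖ + ‖Complex.I * f (imaginaryPart x)‖ := norm_add_le _ _
    _ ≤ 2 * C * ‖x‖ := by linarith

namespace IsGleasonAlgebra

theorem exists_isProjectionDifference (h : IsGleasonAlgebra A n) {x : A} (hx : IsSelfAdjoint x) :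
    ∃ k, IsProjectionDifference x k := by
  obtain ⟨M, hM0, hy1⟩ := exists_norm_inv_natCast_smul_le_one x
  obtain ⟨s, t, hs, ht, hst, -, -⟩ :=
    h.isProjectionDifference _ ((IsSelfAdjoint.all _).smul hx) hy1
  refine ⟨max (M • s).card (M • t).card, M • s, M • t,
    fun p hp ↦ hs p (Multiset.mem_of_mem_nsmul hp), fun p hp ↦ ht p (Multiset.mem_of_mem_nsmul hp),
    ?_, le_max_left _ _, le_max_right _ _⟩
  rw [Multiset.sum_nsmul, Multiset.sum_nsmul, ← nsmul_sub, ← hst, ← Nat.cast_smul_eq_nsmul ℝ,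
    smul_inv_smul₀ hM0]

theorem linearMap_ext (h : IsGleasonAlgebra A n) {M : Type*} [AddCommGroup M] [Module ℂ M]
    {F₁ F₂ : A →ₗ[ℂ] M} (hF : ∀ p, IsStarProjection p → F₁ p = F₂ p) : F₁ = F₂ := by
  have hsum {s : Multiset A} (hs : ∀ p ∈ s, IsStarProjection p) : F₁ s.sum = F₂ s.sum := by
    rw [map_multiset_sum, map_multiset_sum, Multiset.map_congr rfl fun p hp ↦ hF p (hs p hp)]
  have hself (x : A) (hx : IsSelfAdjoint x) : F₁ x = F₂ x := by
    obtain ⟨k, s, t, hs, ht, rfl, -, -⟩ := h.exists_isProjectionDifference hx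
    rw [map_sub, map_sub, hsum hs, hsum ht]
  ext x
  rw [← realPart_add_I_smul_imaginaryPart x, map_add, map_add, map_smul, map_smul,
    hself _ (realPart x).2, hself _ (imaginaryPart x).2]

theorem exists_addMonoidHom (h : IsGleasonAlgebra A n) (hm : IsProjectionMeasure m C) :
    ∃ f : selfAdjoint A →+ ℂ, ∀ (x : selfAdjoint A) (s t : Multiset A),
      (∀ p ∈ s, IsStarProjection p) → (∀ p ∈ t, IsStarProjection p) → (x : A) = s.sum - t.sum →
      f x = (s.map m).sum - (t.map m).sum := by
  have hex (x : selfAdjoint A) : ∃ y : ℂ, ∀ s t : Multiset A, (∀ p ∈ s, IsStarProjection p) →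
      (∀ p ∈ t, IsStarProjection p) → (x : A) = s.sum - t.sum →
      y = (s.map m).sum - (t.map m).sum := by
    obtain ⟨k, s, t, hs, ht, hst, -, -⟩ := h.exists_isProjectionDifference x.2
    refine ⟨(s.map m).sum - (t.map m).sum, fun s' t' hs' ht' hst' ↦ ?_⟩
    rw [hst, sub_eq_sub_iff_add_eq_add, ← Multiset.sum_add, ← Multiset.sum_add] at hst'
    have := h.sum_map_eq_sum_map (s + t') (s' + t)
      (fun p hp ↦ (Multiset.mem_add.1 hp).elim (hs p) (ht' p))
      (fun p hp ↦ (Multiset.mem_add.1 hp).elim (hs' p) (ht p)) hst' m C hm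
    rwa [Multiset.map_add, Multiset.map_add, Multiset.sum_add, Multiset.sum_add,
      ← sub_eq_sub_iff_add_eq_add] at this
  choose f hf using hex
  refine ⟨AddMonoidHom.mk' f fun x y ↦ ?_, hf⟩
  obtain ⟨k, s, t, hs, ht, hst, -, -⟩ := h.exists_isProjectionDifference x.2
  obtain ⟨k', s', t', hs', ht', hst', -, -⟩ := h.exists_isProjectionDifference y.2
  have hxy : (↑(x + y) : A) = (s + s').sum - (t + t').sum := by
    rw [AddSubgroup.coe_add, hst, hst', Multiset.sum_add, Multiset.sum_add]
    abel
  rw [hf x s t hs ht hst, hf y s' t' hs' ht' hst', hf (x + y) (s + s') (t + t')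
    (fun p hp ↦ (Multiset.mem_add.1 hp).elim (hs p) (hs' p))
    (fun p hp ↦ (Multiset.mem_add.1 hp).elim (ht p) (ht' p)) hxy]
  simp only [Multiset.map_add, Multiset.sum_add]
  ring

theorem exists_realLinearMap (h : IsGleasonAlgebra A n) (hm : IsProjectionMeasure m C) :
    ∃ f : selfAdjoint A →L[ℝ] ℂ, (∀ x : selfAdjoint A, IsStarProjection (x : A) → f x = m x) ∧
      ‖f‖ ≤ 2 * n * C := by
  obtain ⟨f, hf⟩ := h.exists_addMonoidHom hm
  have hball (x : selfAdjoint A) (hx : ‖x‖ ≤ 1) : ‖f x‖ ≤ 2 * n * C := by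
    obtain ⟨s, t, hs, ht, hst, hsn, htn⟩ := h.isProjectionDifference (x : A) x.2 hx
    rw [hf x s t hs ht hst]
    exact hm.norm_sum_map_sub_le hs ht hsn htn
  have hcont : Continuous f := by
    refine f.continuous_of_isBounded_nhds_zero (Metric.closedBall_mem_nhds 0 one_pos)
      (isBounded_iff_forall_norm_le.2 ⟨2 * n * C, ?_⟩)
    rintro _ ⟨x, hx, rfl⟩
    exact hball x (mem_closedBall_zero_iff.1 hx)
  refine ⟨f.toRealLinearMap hcont, fun x hx ↦ ?_, ?_⟩
  · simpa using hf x {(x : A)} 0 (by simpa using hx) (by simp) (by simp)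
  · have := hm.bound_nonneg
    exact opNorm_le_of_unit_norm (by positivity) fun x hx ↦ hball x hx.le

theorem exists_linearMap (h : IsGleasonAlgebra A n) (hm : IsProjectionMeasure m C) :
    ∃ F : A →ₗ[ℂ] ℂ, (∀ p, IsStarProjection p → F p = m p) ∧ ∀ x, ‖F x‖ ≤ 4 * n * C * ‖x‖ := by
  obtain ⟨f, hfm, hf⟩ := h.exists_realLinearMap hm
  have hC := hm.bound_nonneg
  refine ⟨complexify f, fun p hp ↦ ?_, fun x ↦ ?_⟩
  · exact (complexify_apply_coe (f : selfAdjoint A →ₗ[ℝ] ℂ) ⟨p, hp.isSelfAdjoint⟩).trans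
      (hfm ⟨p, hp.isSelfAdjoint⟩ hp)
  · refine (norm_complexify_apply_le (by positivity) (f.le_of_opNorm_le hf) x).trans_eq ?_
    ring

theorem exists_bilinearMap (h : IsGleasonAlgebra A n) {d : A → A → ℂ}
    (hd : IsProjectionBimeasure d C) :
    ∃ D : A →ₗ[ℂ] A →ₗ[ℂ] ℂ, (∀ p q, IsStarProjection p → IsStarProjection q → D p q = d p q) ∧
      ∀ x y, ‖D x y‖ ≤ 4 * n * (4 * n * C) * ‖x‖ * ‖y‖ := by
  have hleft (q : A) : ∃ F : A →ₗ[ℂ] ℂ, IsStarProjection q →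
      (∀ p, IsStarProjection p → F p = d p q) ∧ ∀ x, ‖F x‖ ≤ 4 * n * C * ‖x‖ := by
    by_cases hq : IsStarProjection q
    · exact (h.exists_linearMap (hd.left q hq)).imp fun F hF _ ↦ hF
    · exact ⟨0, fun hq' ↦ absurd hq' hq⟩
  choose F hF using hleft
  have hF_measure (x : A) : IsProjectionMeasure (fun q ↦ F q x) (4 * n * C * ‖x‖) := by
    refine ⟨fun p q hp hq hpq ↦ ?_, fun q hq ↦ (hF q hq).2 x⟩
    have hadd : F (p + q) = F p + F q := h.linearMap_ext fun r hr ↦ by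
      rw [LinearMap.add_apply, (hF _ (hp.add hq hpq)).1 r hr, (hF _ hp).1 r hr, (hF _ hq).1 r hr]
      exact (hd.right r hr).add p q hp hq hpq
    rw [hadd, LinearMap.add_apply]
  choose D hD hD_norm using fun x ↦ h.exists_linearMap (hF_measure x)
  refine ⟨⟨⟨D, fun x y ↦ ?_⟩, fun c x ↦ ?_⟩, fun p q hp hq ↦ ?_, fun x y ↦ ?_⟩
  · exact h.linearMap_ext fun q hq ↦ by
      rw [LinearMap.add_apply, hD _ q hq, hD _ q hq, hD _ q hq, map_add]
  · exact h.linearMap_ext fun q hq ↦ by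
      rw [RingHom.id_apply, LinearMap.smul_apply, hD _ q hq, hD _ q hq, map_smul]
  · exact (hD p q hq).trans ((hF q hq).1 p hp)
  · refine (hD_norm x y).trans_eq ?_
    ring

end IsGleasonAlgebra

theorem HasSeparatingIsometries.isGleasonAlgebra {H : Type*} [NormedAddCommGroup H]
    [InnerProductSpace ℂ H] [CompleteSpace H] (hsep : HasSeparatingIsometries (H →L[ℂ] H))
    {V₁ V₂ : H →L[ℂ] H} (hV : IsAmpliatingPair V₁ V₂) : IsGleasonAlgebra (H →L[ℂ] H) 24 where
  isProjectionDifference _ hx hx1 := hV.isProjectionDifference hx hx1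
  sum_map_eq_sum_map _ _ hs ht hst _ _ hm :=
    hsep.sum_map_eq_sum_map hV.toIsCuntzPair hm hs ht hst

end Extension

section HilbertBasis

variable {ι H K : Type*} [NormedAddCommGroup H] [InnerProductSpace ℂ H] [NormedAddCommGroup K]
  [InnerProductSpace ℂ K]

theorem hilbertBasis_dense_span (b : HilbertBasis ι ℂ H) :
    Dense (Submodule.span ℂ (Set.range b) : Set H) :=
  Submodule.dense_iff_topologicalClosure_eq_top.2 b.dense_span

theorem eq_zero_of_forall_inner_hilbertBasis_eq_zero (b : HilbertBasis ι ℂ H) {x : H}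
    (h : ∀ i, ⟪b i, x⟫ = 0) : x = 0 := by
  refine b.repr.injective (lp.ext (funext fun i ↦ ?_))
  rw [b.repr_apply_apply, h, map_zero]
  rfl

theorem eq_of_forall_inner_eq_of_dense_span {s : Set H}
    (hs : Dense (Submodule.span ℂ s : Set H)) {x y : H} (h : ∀ v ∈ s, ⟪v, x⟫ = ⟪v, y⟫) :
    x = y := by
  have hxy : innerSL ℂ x = innerSL ℂ y :=
    ContinuousLinearMap.ext_on hs fun v hv ↦ by
      rw [innerSL_apply_apply, innerSL_apply_apply, ← inner_conj_symm, h v hv, inner_conj_symm]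
  exact ext_inner_right ℂ fun v ↦ DFunLike.congr_fun hxy v

theorem exists_isometry_hilbertBasis [CompleteSpace H] [CompleteSpace K] (b : HilbertBasis ι ℂ H)
    {w : ι → K} (hw : Orthonormal ℂ w) :
    ∃ S : H →L[ℂ] K, adjoint S ∘L S = 1 ∧ ∀ i, S (b i) = w i := by
  classical
  let S : H →ₗᵢ[ℂ] K := hw.orthogonalFamily.linearIsometry.comp b.repr.toLinearIsometry
  refine ⟨S.toContinuousLinearMap, (norm_map_iff_adjoint_comp_self _).1 S.norm_map, fun i ↦ ?_⟩
  have hS : S (b i) = hw.orthogonalFamily.linearIsometry (b.repr (b i)) := rfl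
  rw [LinearIsometry.coe_toContinuousLinearMap, hS, HilbertBasis.repr_self,
    OrthogonalFamily.linearIsometry_apply_single, LinearIsometry.toSpanSingleton_apply, one_smul]

theorem infinite_of_hilbertBasis (b : HilbertBasis ι ℂ H) (hH : ¬ FiniteDimensional ℂ H) :
    Infinite ι := by
  by_contra hι
  have := not_infinite_iff_finite.1 hι
  have := Fintype.ofFinite ι
  exact hH b.toOrthonormalBasis.toBasis.finiteDimensional_of_finite

end HilbertBasis

namespace OperatorTensor

variable {H K : Type u} [NormedAddCommGroup H] [InnerProductSpace ℂ H] [NormedAddCommGroup K]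
  [InnerProductSpace ℂ K] (J : OperatorTensor H K)

theorem ext_tmul {T S : K →L[ℂ] K} (h : ∀ a b, T (J.tmul a b) = S (J.tmul a b)) : T = S := by
  refine ContinuousLinearMap.ext_on J.dense_span ?_
  rintro _ ⟨z, rfl⟩
  exact h z.1 z.2

theorem eq_of_inner_tmul_eq {u v : K} (h : ∀ a b, ⟪J.tmul a b, u⟫ = ⟪J.tmul a b, v⟫) :
    u = v := by
  refine eq_of_forall_inner_eq_of_dense_span J.dense_span ?_
  rintro _ ⟨z, rfl⟩
  exact h z.1 z.2

theorem op_mul (x x' y y' : H →L[ℂ] H) : J.op (x * x') (y * y') = J.op x y * J.op x' y' :=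
  J.ext_tmul fun a b ↦ by simp [J.op_tmul]

theorem op_one : J.op 1 1 = 1 :=
  J.ext_tmul fun a b ↦ by simp [J.op_tmul]

/-- The operator tensor product `(x, y) ↦ x ⊗ y` as a bilinear map. -/
def opBilin : (H →L[ℂ] H) →ₗ[ℂ] (H →L[ℂ] H) →ₗ[ℂ] (K →L[ℂ] K) :=
  LinearMap.mk₂ ℂ J.op
    (fun _ _ _ ↦ J.ext_tmul fun _ _ ↦ by simp [J.op_tmul])
    (fun _ _ _ ↦ J.ext_tmul fun _ _ ↦ by simp [J.op_tmul])
    (fun _ _ _ ↦ J.ext_tmul fun _ _ ↦ by simp [J.op_tmul])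
    (fun _ _ _ ↦ J.ext_tmul fun _ _ ↦ by simp [J.op_tmul])

@[simp]
theorem opBilin_apply (x y : H →L[ℂ] H) : J.opBilin x y = J.op x y := rfl

theorem norm_tmul (a b : H) : ‖J.tmul a b‖ = ‖a‖ * ‖b‖ := by
  have hinner := J.inner_tmul a b a b
  simp only [inner_self_eq_norm_sq_to_K] at hinner
  have hsq : ‖J.tmul a b‖ ^ 2 = (‖a‖ * ‖b‖) ^ 2 := by
    rw [mul_pow]
    exact_mod_cast hinner
  exact (pow_left_inj₀ (norm_nonneg _) (by positivity) two_ne_zero).1 hsq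

/-- The tensor product of vectors as a continuous bilinear map. -/
def tmulL : H →L[ℂ] H →L[ℂ] K :=
  J.tmul.mkContinuous₂ 1 fun a b ↦ by rw [norm_tmul, one_mul]

@[simp]
theorem tmulL_apply (a b : H) : J.tmulL a b = J.tmul a b := rfl

theorem orthonormal_tmul {ι κ : Type*} {v : ι → H} {w : κ → H} (hv : Orthonormal ℂ v)
    (hw : Orthonormal ℂ w) : Orthonormal ℂ fun z : ι × κ ↦ J.tmul (v z.1) (w z.2) := by
  classical
  rw [orthonormal_iff_ite] at hv hw ⊢
  rintro ⟨i, j⟩ ⟨k, l⟩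
  simp only [J.inner_tmul, hv, hw, Prod.mk.injEq, ite_and, ite_zero_mul, one_mul]

section Complete

variable [CompleteSpace H] [CompleteSpace K]

theorem star_op (x y : H →L[ℂ] H) : star (J.op x y) = J.op (star x) (star y) :=
  J.ext_tmul fun a b ↦ J.eq_of_inner_tmul_eq fun c e ↦ by
    simp only [star_eq_adjoint, adjoint_inner_right, J.op_tmul, J.inner_tmul]

theorem norm_op_one_left_le (y : H →L[ℂ] H) : ‖J.op 1 y‖ ≤ ‖y‖ :=
  NonUnitalStarAlgHom.norm_apply_le
    ({ J.opBilin 1 with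
      map_zero' := map_zero (J.opBilin 1)
      map_mul' := fun x y ↦ by simpa using J.op_mul 1 1 x y
      map_star' := fun x ↦ by simpa using (J.star_op 1 x).symm } :
      (H →L[ℂ] H) →⋆ₙₐ[ℂ] (K →L[ℂ] K)) y

theorem norm_op_one_right_le (x : H →L[ℂ] H) : ‖J.op x 1‖ ≤ ‖x‖ :=
  NonUnitalStarAlgHom.norm_apply_le
    ({ J.opBilin.flip 1 with
      map_zero' := map_zero (J.opBilin.flip 1)
      map_mul' := fun x y ↦ by simpa using J.op_mul x y 1 1
      map_star' := fun x ↦ by simpa using (J.star_op x 1).symm } :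
      (H →L[ℂ] H) →⋆ₙₐ[ℂ] (K →L[ℂ] K)) x

theorem norm_op_le (x y : H →L[ℂ] H) : ‖J.op x y‖ ≤ ‖x‖ * ‖y‖ :=
  calc ‖J.op x y‖ = ‖J.op x 1 * J.op 1 y‖ := by rw [← J.op_mul, mul_one, one_mul]
    _ ≤ ‖J.op x 1‖ * ‖J.op 1 y‖ := norm_mul_le _ _
    _ ≤ ‖x‖ * ‖y‖ := by gcongr; exacts [J.norm_op_one_right_le x, J.norm_op_one_left_le y]

/-- The operator tensor product `(x, y) ↦ x ⊗ y` as a continuous bilinear map. -/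
def opL : (H →L[ℂ] H) →L[ℂ] (H →L[ℂ] H) →L[ℂ] (K →L[ℂ] K) :=
  J.opBilin.mkContinuous₂ 1 fun x y ↦ by simpa using J.norm_op_le x y

theorem adjoint_tmulL_tmul (e a b : H) : adjoint (J.tmulL e) (J.tmul a b) = ⟪e, a⟫ • b :=
  ext_inner_left ℂ fun v ↦ by
    rw [adjoint_inner_right, tmulL_apply, J.inner_tmul, inner_smul_right]

theorem eq_zero_of_forall_inner_tmul_hilbertBasis_eq_zero {ι : Type*} (b : HilbertBasis ι ℂ H)
    {v : K} (h : ∀ i j, ⟪J.tmul (b i) (b j), v⟫ = 0) : v = 0 := by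
  have hleft (i : ι) : adjoint (J.tmulL (b i)) v = 0 :=
    eq_zero_of_forall_inner_hilbertBasis_eq_zero b fun j ↦ by
      rw [adjoint_inner_right, tmulL_apply, h]
  have hright (c : H) : adjoint (J.tmulL.flip c) v = 0 :=
    eq_zero_of_forall_inner_hilbertBasis_eq_zero b fun i ↦ by
      rw [adjoint_inner_right, flip_apply, ← adjoint_inner_right, hleft, inner_zero_right]
  refine J.eq_of_inner_tmul_eq fun a c ↦ ?_
  rw [inner_zero_right, ← tmulL_apply, ← flip_apply, ← adjoint_inner_right, hright,
    inner_zero_right]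

theorem exists_hilbertBasis_tmul {ι : Type*} (b : HilbertBasis ι ℂ H) :
    ∃ B : HilbertBasis (ι × ι) ℂ K, ∀ z, B z = J.tmul (b z.1) (b z.2) := by
  have hbot : (Submodule.span ℂ (Set.range fun z : ι × ι ↦ J.tmul (b z.1) (b z.2)))ᗮ = ⊥ := by
    refine (Submodule.eq_bot_iff _).2 fun v hv ↦
      J.eq_zero_of_forall_inner_tmul_hilbertBasis_eq_zero b fun i j ↦ ?_
    exact (Submodule.mem_orthogonal _ _).1 hv _ (Submodule.subset_span ⟨(i, j), rfl⟩)
  exact ⟨.mkOfOrthogonalEqBot (J.orthonormal_tmul b.orthonormal b.orthonormal) hbot,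
    fun z ↦ by simp⟩

end Complete

end OperatorTensor

section InfiniteDimensional

variable {H K : Type u} [NormedAddCommGroup H] [InnerProductSpace ℂ H] [CompleteSpace H]
  [NormedAddCommGroup K] [InnerProductSpace ℂ K]

namespace OperatorTensor

theorem nonempty_linearIsometryEquiv [CompleteSpace K] (J : OperatorTensor H K)
    (hH : ¬ FiniteDimensional ℂ H) : Nonempty (K ≃ₗᵢ[ℂ] H) := by
  obtain ⟨I, b, -⟩ := exists_hilbertBasis ℂ H
  have := infinite_of_hilbertBasis b hH
  obtain ⟨B, -⟩ := J.exists_hilbertBasis_tmul b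
  obtain ⟨e⟩ : Nonempty (I × I ≃ I) := Cardinal.eq.1 (by simp)
  let B' : HilbertBasis I ℂ K := HilbertBasis.mk (v := B ∘ e.symm)
    (B.orthonormal.comp _ e.symm.injective)
    (by rw [e.symm.surjective.range_comp]; exact B.dense_span.ge)
  exact ⟨B'.repr.trans b.repr.symm⟩

end OperatorTensor

theorem exists_shift (hH : ¬ FiniteDimensional ℂ H) :
    ∃ (S : H →L[ℂ] H) (e : H), ‖e‖ = 1 ∧ star S * S = 1 ∧ star S e = 0 ∧
      S * star S + rankOneProj e = 1 := by
  obtain ⟨I, b, -⟩ := exists_hilbertBasis ℂ H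
  have := infinite_of_hilbertBasis b hH
  obtain ⟨f⟩ : Nonempty (Option I ≃ I) := Cardinal.eq.1 (by simp)
  have hfi (i : I) : f none ≠ f (some i) := f.injective.ne (by simp)
  obtain ⟨S, hS, hSb⟩ := exists_isometry_hilbertBasis b
    (b.orthonormal.comp (fun i ↦ f (some i)) (f.injective.comp (Option.some_injective I)))
  have hSe : star S (b (f none)) = 0 :=
    eq_zero_of_forall_inner_hilbertBasis_eq_zero b fun i ↦ by
      rw [star_eq_adjoint, adjoint_inner_right, hSb]
      exact b.orthonormal.2 (hfi i).symm
  refine ⟨S, b (f none), b.orthonormal.1 _, hS, hSe, ?_⟩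
  refine ContinuousLinearMap.ext_on (hilbertBasis_dense_span b) ?_
  rintro _ ⟨j, rfl⟩
  obtain ⟨_ | i, rfl⟩ := f.surjective j
  · simp [rankOneProj, hSe, b.orthonormal.1]
  · have hSi : star S (b (f (some i))) = b i := by
      have hSSi : star S (S (b i)) = b i := DFunLike.congr_fun hS (b i)
      rwa [hSb] at hSSi
    have hinner : ⟪b (f none), b (f (some i))⟫ = 0 := b.orthonormal.2 (hfi i)
    simp [rankOneProj, hSi, hSb, hinner]

namespace OperatorTensor

variable [CompleteSpace K] (J : OperatorTensor H K) {e : H}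

theorem adjoint_tmulL_comp_tmulL (he : ‖e‖ = 1) : adjoint (J.tmulL e) ∘L J.tmulL e = 1 := by
  ext x
  simp [adjoint_tmulL_tmul, he]

theorem adjoint_tmulL_comp_op {S : H →L[ℂ] H} (hSe : star S e = 0) (y : H →L[ℂ] H) :
    adjoint (J.tmulL e) ∘L J.op S y = 0 := by
  refine ContinuousLinearMap.ext_on J.dense_span ?_
  rintro _ ⟨z, rfl⟩
  have hinner : ⟪e, S z.1⟫ = 0 := by
    rw [← adjoint_inner_left, ← star_eq_adjoint, hSe, inner_zero_left]
  simp [J.op_tmul, adjoint_tmulL_tmul, hinner]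

theorem tmulL_comp_comp_adjoint_tmulL (e : H) (y : H →L[ℂ] H) :
    J.tmulL e ∘L y ∘L adjoint (J.tmulL e) = J.op (rankOneProj e) y :=
  J.ext_tmul fun a b ↦ by simp [J.op_tmul, adjoint_tmulL_tmul, rankOneProj]

/-- Identify `H ⊗ H` with `H`. Splitting the first factor as `ℂ e ⊕ S H` writes `1 ⊗ y` as a copy
of `y` plus a copy of `1 ⊗ y` itself. -/
theorem exists_isAmpliatingPair (J : OperatorTensor H K) (hH : ¬ FiniteDimensional ℂ H) :
    ∃ V₁ V₂ : H →L[ℂ] H, IsAmpliatingPair V₁ V₂ := by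
  obtain ⟨U⟩ := J.nonempty_linearIsometryEquiv hH
  obtain ⟨S, e, he, hS, hSe, hsum⟩ := exists_shift hH
  let Φ := U.conjStarAlgEquiv
  let V : H →L[ℂ] H := U ∘L J.tmulL e
  have hstarV : star V = adjoint (J.tmulL e) ∘L U.symm := by
    rw [star_eq_adjoint, adjoint_comp, LinearIsometryEquiv.adjoint_eq_symm]
  have hconj (y : H →L[ℂ] H) : V * y * star V = Φ (J.op (rankOneProj e) y) := by
    rw [hstarV, ← tmulL_comp_comp_adjoint_tmulL]
    rfl
  have hsplit (y : H →L[ℂ] H) :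
      Φ (J.op 1 y) = V * y * star V + Φ (J.op S 1) * Φ (J.op 1 y) * star (Φ (J.op S 1)) := by
    rw [hconj, ← map_star, star_op, ← map_mul, ← map_mul, ← op_mul, ← op_mul, ← map_add,
      ← opBilin_apply, ← opBilin_apply, ← opBilin_apply, star_one, mul_one, mul_one, one_mul,
      ← LinearMap.add_apply, ← map_add, add_comm, hsum]
  refine ⟨V, Φ (J.op S 1), ⟨?_, ?_, ?_, ?_⟩, fun y hy ↦ ⟨Φ (J.op 1 y), ?_, ?_, hsplit y⟩⟩
  · rw [hstarV]
    ext x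
    simpa [V] using DFunLike.congr_fun (J.adjoint_tmulL_comp_tmulL he) x
  · rw [← map_star, ← map_mul, star_op, ← op_mul, hS, star_one, one_mul, op_one, map_one]
  · rw [hstarV]
    ext x
    simpa [Φ] using DFunLike.congr_fun (J.adjoint_tmulL_comp_op hSe 1) (U.symm x)
  · simpa only [op_one, map_one, mul_one] using (hsplit 1).symm
  · exact .map (by rw [isSelfAdjoint_iff, star_op, star_one, hy.star_eq]) Φ
  · rw [StarAlgEquiv.norm_map]
    exact J.norm_op_one_left_le y

end OperatorTensor

end InfiniteDimensional

section Separation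

variable {H : Type u} [NormedAddCommGroup H] [InnerProductSpace ℂ H]

theorem exists_unit_orthogonal_of_finite (hH : ¬ FiniteDimensional ℂ H) {W : Set H}
    (hW : W.Finite) : ∃ r : H, ‖r‖ = 1 ∧ ∀ w ∈ W, ⟪w, r⟫ = 0 := by
  have := FiniteDimensional.span_of_finite ℂ hW
  have hne : (Submodule.span ℂ W)ᗮ ≠ ⊥ := fun hbot ↦ by
    rw [Submodule.orthogonal_eq_bot_iff] at hbot
    rw [hbot] at this
    exact hH Submodule.topEquiv.finiteDimensional
  obtain ⟨r, hr, hr0⟩ := Submodule.exists_mem_ne_zero_of_ne_bot hne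
  refine ⟨(‖r‖⁻¹ : ℂ) • r, norm_smul_inv_norm hr0, fun w hw ↦ ?_⟩
  rw [inner_smul_right, (Submodule.mem_orthogonal _ r).1 hr w (Submodule.subset_span hw), mul_zero]

theorem exists_hilbertBasis_orthogonal_of_infinite {I : Type u} (b : HilbertBasis I ℂ H)
    {W : Set H} (hinf : W.Infinite) (hW : Cardinal.mk W < Cardinal.mk I) :
    ∃ i, ∀ w ∈ W, ⟪w, b i⟫ = 0 := by
  have hcount (w : H) : (Function.support fun i ↦ ⟪b i, w⟫).Countable :=
    (b.orthonormal.inner_products_summable w).countable_support.mono fun i hi ↦ by simpa using hi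
  have hcard : Cardinal.mk (⋃ w : W, Function.support fun i ↦ ⟪b i, (w : H)⟫) < Cardinal.mk I :=
    calc _ ≤ Cardinal.mk W * ⨆ w : W, Cardinal.mk (Function.support fun i ↦ ⟪b i, (w : H)⟫) :=
          Cardinal.mk_iUnion_le _
      _ ≤ Cardinal.mk W * Cardinal.aleph0 := by
          gcongr
          exact ciSup_le' fun w ↦ Cardinal.le_aleph0_iff_set_countable.2 (hcount w)
      _ = Cardinal.mk W :=
          have := hinf.to_subtype
          Cardinal.mul_aleph0_eq (Cardinal.aleph0_le_mk W)
      _ < Cardinal.mk I := hW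
  have hne : (⋃ w : W, Function.support fun i ↦ ⟪b i, (w : H)⟫) ≠ Set.univ := fun huniv ↦
    hcard.ne (by rw [huniv, Cardinal.mk_univ])
  obtain ⟨i, hi⟩ := (Set.ne_univ_iff_exists_notMem _).1 hne
  simp only [Set.mem_iUnion, Function.mem_support, not_exists, not_not] at hi
  exact ⟨i, fun w hw ↦ inner_eq_zero_symm.1 (hi ⟨w, hw⟩)⟩

theorem exists_unit_orthogonal {I : Type u} (b : HilbertBasis I ℂ H)
    (hH : ¬ FiniteDimensional ℂ H) {W : Set H} (hW : Cardinal.mk W < Cardinal.mk I) :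
    ∃ r : H, ‖r‖ = 1 ∧ ∀ w ∈ W, ⟪w, r⟫ = 0 := by
  obtain hfin | hinf := W.finite_or_infinite
  · exact exists_unit_orthogonal_of_finite hH hfin
  · obtain ⟨i, hi⟩ := exists_hilbertBasis_orthogonal_of_infinite b hinf hW
    exact ⟨b i, b.orthonormal.1 i, hi⟩

/-- The first components of `A` are orthonormal, so are the second components, and every operator
in `F` has zero matrix coefficients between the former and the latter. -/
structure IsSeparatingSet (F : Set (H →L[ℂ] H)) (A : Set (H × H)) : Prop where
  norm_eq_one : ∀ z ∈ A, ‖z.1‖ = 1 ∧ ‖z.2‖ = 1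
  pairwise_orthogonal : A.Pairwise fun z w ↦ ⟪z.1, w.1⟫ = 0 ∧ ⟪z.2, w.2⟫ = 0
  inner_apply_eq_zero : ∀ T ∈ F, ∀ z ∈ A, ∀ w ∈ A, ⟪z.1, T w.2⟫ = 0

theorem exists_maximal_isSeparatingSet (F : Set (H →L[ℂ] H)) :
    ∃ A, Maximal (IsSeparatingSet F) A := by
  refine zorn_subset {A | IsSeparatingSet F A} fun c hc hchain ↦
    ⟨⋃₀ c, ⟨?_, ?_, ?_⟩, fun _ ↦ Set.subset_sUnion_of_mem⟩
  · rintro z ⟨A, hA, hz⟩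
    exact (hc hA).norm_eq_one z hz
  · exact (Set.pairwise_sUnion hchain.directedOn).2 fun A hA ↦ (hc hA).pairwise_orthogonal
  · rintro T hT z ⟨A, hA, hz⟩ w ⟨B, hB, hw⟩
    obtain ⟨C, hC, hAC, hBC⟩ := hchain.directedOn A hA B hB
    exact (hc hC).inner_apply_eq_zero T hT z (hAC hz) w (hBC hw)

variable [CompleteSpace H]

theorem exists_unit_pair_orthogonal {I : Type u} (b : HilbertBasis I ℂ H)
    (hH : ¬ FiniteDimensional ℂ H) {F : Set (H →L[ℂ] H)} (hF : F.Finite) {A : Set (H × H)}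
    (hA : Cardinal.mk A < Cardinal.mk I) :
    ∃ r r' : H, (‖r‖ = 1 ∧ ‖r'‖ = 1) ∧ (∀ z ∈ A, ⟪r, z.1⟫ = 0 ∧ ⟪r', z.2⟫ = 0) ∧
      ∀ T ∈ F, ⟪r, T r'⟫ = 0 ∧ ∀ z ∈ A, ⟪r, T z.2⟫ = 0 ∧ ⟪z.1, T r'⟫ = 0 := by
  have := infinite_of_hilbertBasis b hH
  have hI : Cardinal.aleph0 ≤ Cardinal.mk I := Cardinal.aleph0_le_mk I
  have hF' : Cardinal.mk F < Cardinal.mk I := hF.lt_aleph0.trans_le hI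
  have hunion {s t : Set H} (hs : Cardinal.mk s < Cardinal.mk I)
      (ht : Cardinal.mk t < Cardinal.mk I) : Cardinal.mk (s ∪ t : Set H) < Cardinal.mk I :=
    (Cardinal.mk_union_le s t).trans_lt (Cardinal.add_lt_of_lt hI hs ht)
  have himage (f : H × H → H) : Cardinal.mk (f '' A) < Cardinal.mk I :=
    Cardinal.mk_image_le.trans_lt hA
  have horbit (f : (H →L[ℂ] H) → H → H) {s : Set H} (hs : Cardinal.mk s < Cardinal.mk I) :
      Cardinal.mk (Set.image2 f F s) < Cardinal.mk I := by
    rw [← Set.image_uncurry_prod]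
    refine Cardinal.mk_image_le.trans_lt ?_
    rw [Cardinal.mk_setProd]
    exact Cardinal.mul_lt_of_lt hI hF' hs
  obtain ⟨r, hr, hr_orth⟩ := exists_unit_orthogonal b hH
    (hunion (himage Prod.fst) (horbit (fun T x ↦ T x) (himage Prod.snd)))
  have hsingle : Cardinal.mk ({r} : Set H) < Cardinal.mk I :=
    (Set.finite_singleton r).lt_aleph0.trans_le hI
  obtain ⟨r', hr', hr'_orth⟩ := exists_unit_orthogonal b hH
    (hunion (himage Prod.snd)
      (horbit (fun T x ↦ adjoint T x) (hunion (himage Prod.fst) hsingle)))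
  refine ⟨r, r', ⟨hr, hr'⟩, fun z hz ↦ ⟨?_, ?_⟩, fun T hT ↦ ⟨?_, fun z hz ↦ ⟨?_, ?_⟩⟩⟩
  · exact inner_eq_zero_symm.1 (hr_orth _ (.inl ⟨z, hz, rfl⟩))
  · exact inner_eq_zero_symm.1 (hr'_orth _ (.inl ⟨z, hz, rfl⟩))
  · exact (adjoint_inner_left T r' r).symm.trans (hr'_orth _ (.inr ⟨T, hT, r, .inr rfl, rfl⟩))
  · exact inner_eq_zero_symm.1 (hr_orth _ (.inr ⟨T, hT, z.2, ⟨z, hz, rfl⟩, rfl⟩))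
  · exact (adjoint_inner_left T r' z.1).symm.trans
      (hr'_orth _ (.inr ⟨T, hT, z.1, .inl ⟨z, hz, rfl⟩, rfl⟩))

theorem card_le_of_maximal_isSeparatingSet {I : Type u} (b : HilbertBasis I ℂ H)
    (hH : ¬ FiniteDimensional ℂ H) {F : Set (H →L[ℂ] H)} (hF : F.Finite) {A : Set (H × H)}
    (hA : Maximal (IsSeparatingSet F) A) : Cardinal.mk I ≤ Cardinal.mk A := by
  by_contra! hlt
  obtain ⟨r, r', hnorm, horth, hF_orth⟩ := exists_unit_pair_orthogonal b hH hF hlt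
  have hinsert : IsSeparatingSet F (insert (r, r') A) := by
    refine ⟨?_, ?_, ?_⟩
    · rintro z (rfl | hz)
      exacts [hnorm, hA.prop.norm_eq_one z hz]
    · exact hA.prop.pairwise_orthogonal.insert fun z hz _ ↦
        ⟨horth z hz, (horth z hz).imp inner_eq_zero_symm.1 inner_eq_zero_symm.1⟩
    · rintro T hT z (rfl | hz) w (rfl | hw)
      exacts [(hF_orth T hT).1, ((hF_orth T hT).2 w hw).1, ((hF_orth T hT).2 z hz).2,
        hA.prop.inner_apply_eq_zero T hT z hz w hw]
  have hmem : (r, r') ∈ A := hA.mem_of_prop_insert hinsert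
  have hr0 : r = 0 := inner_self_eq_zero.1 (horth _ hmem).1
  simp [hr0] at hnorm

theorem hasSeparatingIsometries (hH : ¬ FiniteDimensional ℂ H) :
    HasSeparatingIsometries (H →L[ℂ] H) := by
  intro s
  obtain ⟨I, b, -⟩ := exists_hilbertBasis ℂ H
  have hF : (insert 1 {x | x ∈ s}).Finite := s.finite_toSet.insert 1
  obtain ⟨A, hA⟩ := exists_maximal_isSeparatingSet (insert 1 {x | x ∈ s})
  obtain ⟨f⟩ := card_le_of_maximal_isSeparatingSet b hH hF hA
  have hne {i j : I} (hij : i ≠ j) : (f i : H × H) ≠ f j :=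
    Subtype.coe_injective.ne (f.injective.ne hij)
  obtain ⟨v, hv, hvb⟩ := exists_isometry_hilbertBasis b (w := fun i ↦ (f i : H × H).1)
    ⟨fun i ↦ (hA.prop.norm_eq_one _ (f i).2).1,
      fun i j hij ↦ (hA.prop.pairwise_orthogonal (f i).2 (f j).2 (hne hij)).1⟩
  obtain ⟨v', hv', hvb'⟩ := exists_isometry_hilbertBasis b (w := fun i ↦ (f i : H × H).2)
    ⟨fun i ↦ (hA.prop.norm_eq_one _ (f i).2).2,
      fun i j hij ↦ (hA.prop.pairwise_orthogonal (f i).2 (f j).2 (hne hij)).2⟩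
  have hcorner (x : H →L[ℂ] H) (hx : x ∈ insert 1 {x | x ∈ s}) : star v * x * v' = 0 := by
    refine ContinuousLinearMap.ext_on (hilbertBasis_dense_span b) ?_
    rintro _ ⟨i, rfl⟩
    refine eq_zero_of_forall_inner_hilbertBasis_eq_zero b fun j ↦ ?_
    change ⟪b j, adjoint v (x (v' (b i)))⟫ = 0
    rw [adjoint_inner_right, hvb, hvb']
    exact hA.prop.inner_apply_eq_zero x hx _ (f j).2 _ (f i).2
  exact ⟨v, v', hv, hv', by simpa using hcorner 1 (.inl rfl), fun x hx ↦ hcorner x (.inr hx)⟩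

theorem OperatorTensor.isGleasonAlgebra {K : Type u} [NormedAddCommGroup K]
    [InnerProductSpace ℂ K] [CompleteSpace K] (J : OperatorTensor H K)
    (hH : ¬ FiniteDimensional ℂ H) : IsGleasonAlgebra (H →L[ℂ] H) 24 := by
  obtain ⟨V₁, V₂, hV⟩ := J.exists_isAmpliatingPair hH
  exact (hasSeparatingIsometries hH).isGleasonAlgebra hV

end Separation

section CompactOperators

open InnerProductSpace

variable {H : Type*} [NormedAddCommGroup H] [InnerProductSpace ℂ H]

theorem isCompactOperator_rankOne (ξ η : H) : IsCompactOperator (rankOne ℂ ξ η) := by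
  have hη : IsCompactOperator (innerSL ℂ η) := isCompactOperator_of_locallyCompactSpace_dom _
  exact hη.clm_comp (toSpanSingleton ℂ ξ)

theorem hasFiniteRank_rankOne (ξ η : H) : HasFiniteRank (rankOne ℂ ξ η) := by
  refine Submodule.finiteDimensional_of_le (S₂ := Submodule.span ℂ {ξ}) ?_
  rintro _ ⟨z, rfl⟩
  exact Submodule.mem_span_singleton.2 ⟨⟪η, z⟫, rfl⟩

theorem HasFiniteRank.isCompactOperator {x : H →L[ℂ] H} (hx : HasFiniteRank x) :
    IsCompactOperator x := by
  have : FiniteDimensional ℂ (LinearMap.range (x : H →ₗ[ℂ] H)) := hx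
  have := FiniteDimensional.proper ℂ (LinearMap.range (x : H →ₗ[ℂ] H))
  have hrange : IsCompactOperator x.rangeRestrict := isCompactOperator_of_locallyCompactSpace_dom _
  exact hrange.clm_comp (Submodule.subtypeL _)

theorem norm_sub_starProjection_apply_le (U : Submodule ℂ H) [U.HasOrthogonalProjection] (z : H)
    {y : H} (hy : y ∈ U) : ‖z - U.starProjection z‖ ≤ ‖z - y‖ := by
  rw [U.starProjection_minimal]
  exact ciInf_le ⟨0, Set.forall_mem_range.2 fun _ ↦ norm_nonneg _⟩ (⟨y, hy⟩ : U)

theorem exists_finiteDimensional_norm_sub_starProjection_comp_le {x : H →L[ℂ] H}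
    (hx : IsCompactOperator x) {ε : ℝ} (hε : 0 < ε) :
    ∃ (U : Submodule ℂ H) (_ : FiniteDimensional ℂ U), ‖x - U.starProjection ∘L x‖ ≤ ε := by
  have hball : IsCompact (closure (x '' Metric.closedBall 0 1)) :=
    IsCompactOperator.isCompact_closure_image_closedBall (f := (x : H →ₗ[ℂ] H)) hx 1
  obtain ⟨t, ht, hcover⟩ :=
    Metric.totallyBounded_iff.1 (hball.totallyBounded.subset subset_closure) ε hε
  have hU := FiniteDimensional.span_of_finite ℂ ht
  refine ⟨Submodule.span ℂ t, hU, opNorm_le_of_unit_norm hε.le fun z hz ↦ ?_⟩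
  obtain ⟨y, hy, hxy⟩ := Set.mem_iUnion₂.1 (hcover ⟨z, by simp [hz], rfl⟩)
  rw [Metric.mem_ball, dist_eq_norm] at hxy
  exact (norm_sub_starProjection_apply_le _ (x z) (Submodule.subset_span hy)).trans hxy.le

theorem rankOne_mem_of_rankOne_unit_mem {S : Submodule ℂ (H →L[ℂ] H)}
    (hS : ∀ ξ, ‖ξ‖ = 1 → rankOne ℂ ξ ξ ∈ S) (ξ η : H) : rankOne ℂ ξ η ∈ S := by
  have hdiag (v : H) : rankOne ℂ v v ∈ S := by
    obtain rfl | hv := eq_or_ne v 0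
    · simp
    have hunit := hS ((‖v‖⁻¹ : ℂ) • v) (norm_smul_inv_norm hv)
    have hnorm : (‖v‖⁻¹ : ℂ) ^ 2 ≠ 0 := by simpa using hv
    rw [← S.smul_mem_iff hnorm]
    simpa [smul_smul, sq] using hunit
  have hsymm (v w : H) : rankOne ℂ v w + rankOne ℂ w v ∈ S := by
    convert S.sub_mem (S.sub_mem (hdiag (v + w)) (hdiag v)) (hdiag w) using 1
    simp only [map_add, add_apply]
    abel
  have hpolar : rankOne ℂ ξ η = (2⁻¹ : ℂ) • ((rankOne ℂ ξ η + rankOne ℂ η ξ) -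
      Complex.I • (rankOne ℂ (Complex.I • ξ) η + rankOne ℂ η (Complex.I • ξ))) := by
    ext z
    simp only [map_smul, map_smulₛₗ, smul_apply, sub_apply, add_apply, Complex.conj_I, smul_add,
      smul_smul, mul_neg, Complex.I_mul_I]
    module
  rw [hpolar]
  exact S.smul_mem _ (S.sub_mem (hsymm _ _) (S.smul_mem _ (hsymm _ _)))

theorem mem_of_isCompactOperator_of_rankOne_unit_mem [CompleteSpace H]
    {S : Submodule ℂ (H →L[ℂ] H)} (hclosed : IsClosed (S : Set (H →L[ℂ] H)))
    (hS : ∀ ξ, ‖ξ‖ = 1 → rankOne ℂ ξ ξ ∈ S) {x : H →L[ℂ] H} (hx : IsCompactOperator x) :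
    x ∈ S := by
  rw [← SetLike.mem_coe, ← hclosed.closure_eq, Metric.mem_closure_iff]
  intro ε hε
  obtain ⟨U, _, hU⟩ := exists_finiteDimensional_norm_sub_starProjection_comp_le hx (half_pos hε)
  refine ⟨U.starProjection ∘L x, ?_, by rw [dist_eq_norm]; linarith⟩
  rw [(stdOrthonormalBasis ℂ U).starProjection_eq_sum_rankOne, finsetSum_comp]
  refine S.sum_mem fun i _ ↦ ?_
  rw [rankOne_comp]
  exact rankOne_mem_of_rankOne_unit_mem hS _ _

theorem eq_on_compact_of_eq_on_rankOne_unit [CompleteSpace H] {F : Type*} [NormedAddCommGroup F]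
    [NormedSpace ℂ F] {f g : (H →L[ℂ] H) →L[ℂ] F}
    (hfg : ∀ ξ, ‖ξ‖ = 1 → f (rankOne ℂ ξ ξ) = g (rankOne ℂ ξ ξ)) {x : H →L[ℂ] H}
    (hx : IsCompactOperator x) : f x = g x :=
  mem_of_isCompactOperator_of_rankOne_unit_mem
    (S := LinearMap.eqLocus (f : (H →L[ℂ] H) →ₗ[ℂ] F) g)
    (isClosed_eq f.continuous g.continuous) hfg hx

theorem eq_on_compact_of_eq_on_rankOne_unit₂ [CompleteSpace H]
    {Φ Ψ : (H →L[ℂ] H) →L[ℂ] (H →L[ℂ] H) →L[ℂ] ℂ}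
    (h : ∀ ξ η, ‖ξ‖ = 1 → ‖η‖ = 1 →
      Φ (rankOne ℂ ξ ξ) (rankOne ℂ η η) = Ψ (rankOne ℂ ξ ξ) (rankOne ℂ η η))
    {x y : H →L[ℂ] H} (hx : IsCompactOperator x) (hy : IsCompactOperator y) : Φ x y = Ψ x y :=
  eq_on_compact_of_eq_on_rankOne_unit (f := Φ x) (g := Ψ x) (fun η hη ↦
    eq_on_compact_of_eq_on_rankOne_unit (f := Φ.flip _) (g := Ψ.flip _)
      (fun ξ hξ ↦ h ξ η hξ hη) hx) hy

end CompactOperators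

section TraceClass

open InnerProductSpace

variable {ι H : Type*} [NormedAddCommGroup H] [InnerProductSpace ℂ H]

/-- The trace norm of `X` is at most `C`, in the sense of the bound defining `IsTraceClass`. -/
def HasTraceNormLE (X : H →L[ℂ] H) (C : ℝ) : Prop :=
  ∀ (n : ℕ) (e f : Fin n → H), Orthonormal ℂ e → Orthonormal ℂ f → ∑ i, ‖⟪e i, X (f i)⟫‖ ≤ C

theorem HasTraceNormLE.sum_le {X : H →L[ℂ] H} {C : ℝ} (hX : HasTraceNormLE X C) {e f : ι → H}
    (he : Orthonormal ℂ e) (hf : Orthonormal ℂ f) (s : Finset ι) :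
    ∑ i ∈ s, ‖⟪e i, X (f i)⟫‖ ≤ C := by
  have hinj : Function.Injective fun k ↦ (s.equivFin.symm k : ι) :=
    Subtype.val_injective.comp s.equivFin.symm.injective
  calc ∑ i ∈ s, ‖⟪e i, X (f i)⟫‖ = ∑ i : s, ‖⟪e i, X (f i)⟫‖ := (s.sum_coe_sort _).symm
    _ = ∑ k, ‖⟪e (s.equivFin.symm k), X (f (s.equivFin.symm k))⟫‖ :=
      (Equiv.sum_comp s.equivFin.symm fun i : s ↦ ‖⟪e i, X (f i)⟫‖).symm
    _ ≤ C := hX _ _ _ (he.comp _ hinj) (hf.comp _ hinj)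

theorem orthonormal_smul_of_norm_eq_one {v : ι → H} (hv : Orthonormal ℂ v) {c : ι → ℂ}
    (hc : ∀ i, ‖c i‖ = 1) : Orthonormal ℂ fun i ↦ c i • v i :=
  ⟨fun i ↦ by rw [norm_smul, hc, hv.1, one_mul], fun i j hij ↦ by
    simp only [inner_smul_left, inner_smul_right, hv.2 hij, mul_zero]⟩

theorem norm_sq_sum_smul_orthonormal [Fintype ι] {v : ι → H} (hv : Orthonormal ℂ v) (a : ι → ℂ) :
    ‖∑ i, a i • v i‖ ^ 2 = ∑ i, ‖a i‖ ^ 2 := by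
  have hsum := hv.inner_sum a a Finset.univ
  simp only [inner_self_eq_norm_sq_to_K, RCLike.conj_mul] at hsum
  exact_mod_cast hsum

theorem norm_sum_rankOne_orthonormal_le [Fintype ι] {e f : ι → H} (he : Orthonormal ℂ e)
    (hf : Orthonormal ℂ f) : ‖∑ i, rankOne ℂ (f i) (e i)‖ ≤ 1 := by
  refine opNorm_le_bound _ zero_le_one fun z ↦ le_of_sq_le_sq ?_ (by positivity)
  rw [one_mul, sum_apply]
  simp only [rankOne_apply, norm_sq_sum_smul_orthonormal hf]
  exact he.sum_inner_products_le z

section Density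

variable [CompleteSpace H] (g : (H →L[ℂ] H) →L[ℂ] ℂ)

theorem exists_forall_inner_eq_map_rankOne :
    ∃ X : H →L[ℂ] H, ∀ ξ η, ⟪η, X ξ⟫ = g (rankOne ℂ ξ η) := by
  let B : H →L⋆[ℂ] H →L[ℂ] ℂ := LinearMap.mkContinuous₂
    (LinearMap.mk₂'ₛₗ (starRingEnd ℂ) (RingHom.id ℂ) (fun η ξ ↦ g (rankOne ℂ ξ η))
      (by intros; simp) (by intros; simp) (by intros; simp) (by intros; simp)) ‖g‖ fun η ξ ↦ by
      refine (g.le_opNorm _).trans_eq ?_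
      rw [norm_rankOne, mul_assoc, mul_comm ‖ξ‖]
  refine ⟨adjoint (continuousLinearMapOfBilin B), fun ξ η ↦ ?_⟩
  rw [adjoint_inner_right, continuousLinearMapOfBilin_apply]
  rfl

theorem hasTraceNormLE_of_inner_eq_map_rankOne {g : (H →L[ℂ] H) →L[ℂ] ℂ} {X : H →L[ℂ] H}
    (hX : ∀ ξ η, ⟪η, X ξ⟫ = g (rankOne ℂ ξ η)) : HasTraceNormLE X ‖g‖ := by
  intro n e f he hf
  choose c hc hphase using fun i ↦ Complex.exists_norm_eq_mul_self ⟪e i, X (f i)⟫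
  have hsum : ((∑ i, ‖⟪e i, X (f i)⟫‖ : ℝ) : ℂ) = g (∑ i, rankOne ℂ (c i • f i) (e i)) := by
    simp only [Complex.ofReal_sum, map_sum, hphase, ← hX, map_smul (X : H →L[ℂ] H),
      inner_smul_right]
  calc ∑ i, ‖⟪e i, X (f i)⟫‖ = ‖g (∑ i, rankOne ℂ (c i • f i) (e i))‖ := by
        rw [← hsum, Complex.norm_real, Real.norm_of_nonneg (by positivity)]
    _ ≤ ‖g‖ * ‖∑ i, rankOne ℂ (c i • f i) (e i)‖ := g.le_opNorm _
    _ ≤ ‖g‖ := mul_le_of_le_one_right (norm_nonneg _)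
        (norm_sum_rankOne_orthonormal_le he (orthonormal_smul_of_norm_eq_one hf hc))

end Density

section Trace

variable [CompleteSpace H] {X : H →L[ℂ] H} {C : ℝ} (b : HilbertBasis ι ℂ H)

theorem HasTraceNormLE.sum_unitary_le (hX : HasTraceNormLE X C) (u : unitary (H →L[ℂ] H))
    (s : Finset ι) : ∑ i ∈ s, ‖⟪b i, (u : H →L[ℂ] H) (X (b i))⟫‖ ≤ C := by
  have hu : Orthonormal ℂ fun i ↦ star (u : H →L[ℂ] H) (b i) :=
    b.orthonormal.comp_linearIsometryEquiv (Unitary.linearIsometryEquiv (star u))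
  simpa only [star_eq_adjoint, adjoint_inner_left] using hX.sum_le hu b.orthonormal s

theorem HasTraceNormLE.sum_mul_le (hX : HasTraceNormLE X C) (T : H →L[ℂ] H) (s : Finset ι) :
    ∑ i ∈ s, ‖⟪b i, (T * X) (b i)⟫‖ ≤ 2 * C * ‖T‖ := by
  obtain ⟨u, c, hT, hc⟩ := CStarAlgebra.exists_sum_four_unitary T
  have hterm (i : ι) : ‖⟪b i, (T * X) (b i)⟫‖ ≤
      ∑ k, ‖c k‖ * ‖⟪b i, (u k : H →L[ℂ] H) (X (b i))⟫‖ := by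
    have hTX : ⟪b i, (T * X) (b i)⟫ = ∑ k, c k * ⟪b i, (u k : H →L[ℂ] H) (X (b i))⟫ := by
      conv_lhs => rw [hT]
      simp only [mul_apply_eq_comp, sum_apply, inner_sum, smul_apply, inner_smul_right]
    rw [hTX]
    exact norm_sum_le_of_le _ fun k _ ↦ (norm_mul _ _).le
  calc ∑ i ∈ s, ‖⟪b i, (T * X) (b i)⟫‖
      ≤ ∑ i ∈ s, ∑ k, ‖c k‖ * ‖⟪b i, (u k : H →L[ℂ] H) (X (b i))⟫‖ :=
        Finset.sum_le_sum fun i _ ↦ hterm i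
    _ = ∑ k, ‖c k‖ * ∑ i ∈ s, ‖⟪b i, (u k : H →L[ℂ] H) (X (b i))⟫‖ := by
        rw [Finset.sum_comm]
        simp only [Finset.mul_sum]
    _ ≤ ∑ k : Fin 4, ‖T‖ / 2 * C := by
        gcongr with k
        exacts [hc k, hX.sum_unitary_le b (u k) s]
    _ = 2 * C * ‖T‖ := by
        rw [Fin.sum_const]
        ring

theorem HasTraceNormLE.summable_norm_inner_mul (hX : HasTraceNormLE X C) (T : H →L[ℂ] H) :
    Summable fun i ↦ ‖⟪b i, (T * X) (b i)⟫‖ :=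
  summable_of_sum_le (fun _ ↦ norm_nonneg _) (hX.sum_mul_le b T)

theorem exists_forall_eq_traceAlong_mul (hX : IsTraceClass X) :
    ∃ f : (H →L[ℂ] H) →L[ℂ] ℂ, ∀ T, f T = traceAlong b (T * X) := by
  obtain ⟨C, hC : HasTraceNormLE X C⟩ := hX
  have hsum (T : H →L[ℂ] H) : Summable fun i ↦ ⟪b i, (T * X) (b i)⟫ :=
    (hC.summable_norm_inner_mul b T).of_norm
  let f : (H →L[ℂ] H) →ₗ[ℂ] ℂ :=
    { toFun T := traceAlong b (T * X)
      map_add' S T := by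
        simp only [traceAlong, add_mul, add_apply, inner_add_right]
        exact (hsum S).tsum_add (hsum T)
      map_smul' c T := by
        simp only [traceAlong, smul_mul_assoc, smul_apply, inner_smul_right, RingHom.id_apply,
          smul_eq_mul, tsum_mul_left] }
  refine ⟨f.mkContinuous (2 * C) fun T ↦ ?_, fun T ↦ rfl⟩
  have hnorm := hC.summable_norm_inner_mul b T
  exact (norm_tsum_le_tsum_norm hnorm).trans (hnorm.tsum_le_of_sum_le (hC.sum_mul_le b T))

theorem traceAlong_rankOne_mul (X : H →L[ℂ] H) (ξ η : H) :
    traceAlong b (rankOne ℂ ξ η * X) = ⟪η, X ξ⟫ := by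
  rw [← adjoint_inner_left]
  refine HasSum.tsum_eq ((b.hasSum_inner_mul_inner (adjoint X η) ξ).congr_fun fun i ↦ ?_)
  rw [mul_apply_eq_comp, rankOne_apply, inner_smul_right, adjoint_inner_left]

theorem exists_isTraceClass_eq_traceAlong_on_compact (g : (H →L[ℂ] H) →L[ℂ] ℂ) :
    ∃ X : H →L[ℂ] H, IsTraceClass X ∧ ∀ T : H →L[ℂ] H,
       IsCompactOperator T → g T = traceAlong b (T * X) := by
  obtain ⟨X, hX⟩ := exists_forall_inner_eq_map_rankOne g
  have hXtc : IsTraceClass X := ⟨‖g‖, hasTraceNormLE_of_inner_eq_map_rankOne hX⟩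
  obtain ⟨f, hf⟩ := exists_forall_eq_traceAlong_mul b hXtc
  refine ⟨X, hXtc, fun T hT ↦ ?_⟩
  rw [← hf]
  refine eq_on_compact_of_eq_on_rankOne_unit (fun ξ _ ↦ ?_) hT
  rw [hf, traceAlong_rankOne_mul, hX]

end Trace

end TraceClass

section TensorBounded

open InnerProductSpace

theorem isOrthoProj_iff_isStarProjection {H : Type*} [NormedAddCommGroup H]
    [InnerProductSpace ℂ H] [CompleteSpace H] {p : H →L[ℂ] H} :
    IsOrthoProj p ↔ IsStarProjection p :=
  ⟨fun h ↦ ⟨h.1, h.2⟩, fun h ↦ ⟨h.1, h.2⟩⟩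

variable {H K : Type u} [NormedAddCommGroup H] [InnerProductSpace ℂ H] [NormedAddCommGroup K]
  [InnerProductSpace ℂ K]

theorem OperatorTensor.op_rankOne (J : OperatorTensor H K) (a b c e : H) :
    J.op (rankOne ℂ a b) (rankOne ℂ c e) = rankOne ℂ (J.tmul a c) (J.tmul b e) :=
  J.ext_tmul fun x y ↦ by simp [J.op_tmul, J.inner_tmul, smul_smul, mul_comm]

variable [CompleteSpace H]

theorem IsDecoherenceFunctional.isProjectionBimeasure {d : (H →L[ℂ] H) → (H →L[ℂ] H) → ℂ}
    (hd : IsDecoherenceFunctional d) {C : ℝ}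
    (hC : ∀ p q, IsOrthoProj p → IsOrthoProj q → ‖d p q‖ ≤ C) : IsProjectionBimeasure d C := by
  simp only [isOrthoProj_iff_isStarProjection] at hC
  have hadd {p₁ p₂ q : H →L[ℂ] H} (hp₁ : IsStarProjection p₁) (hp₂ : IsStarProjection p₂)
      (hq : IsStarProjection q) (h : p₁ * p₂ = 0) : d (p₁ + p₂) q = d p₁ q + d p₂ q := by
    refine hd.orthoadd p₁ p₂ q ?_ ?_ ?_ h <;> rwa [isOrthoProj_iff_isStarProjection]
  have hconj {p q : H →L[ℂ] H} (hp : IsStarProjection p) (hq : IsStarProjection q) :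
      d p q = starRingEnd ℂ (d q p) := by
    refine hd.hermitian p q ?_ ?_ <;> rwa [isOrthoProj_iff_isStarProjection]
  refine ⟨fun q hq ↦ ⟨fun p₁ p₂ hp₁ hp₂ h ↦ hadd hp₁ hp₂ hq h, fun p hp ↦ hC p q hp hq⟩,
    fun p hp ↦ ⟨fun q₁ q₂ hq₁ hq₂ h ↦ ?_, fun q hq ↦ hC p q hp hq⟩⟩
  rw [hconj hp (hq₁.add hq₂ h), hconj hp hq₁, hconj hp hq₂, hadd hq₁ hq₂ hp h, map_add]

variable [CompleteSpace K] (J : OperatorTensor H K)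

theorem OperatorTensor.isCompactOperator_op {x y : H →L[ℂ] H} (hx : IsCompactOperator x)
    (hy : IsCompactOperator y) : IsCompactOperator (J.op x y) := by
  let S := compactOperator (RingHom.id ℂ) K K
  have hS : IsClosed (S : Set (K →L[ℂ] K)) := isClosed_setOfPred_isCompactOperator
  have hrankOne (η : H) : IsCompactOperator (J.op x (rankOne ℂ η η)) := by
    refine mem_of_isCompactOperator_of_rankOne_unit_mem
      (S := S.comap (J.opL.flip (rankOne ℂ η η)).toLinearMap)
      (hS.preimage (J.opL.flip _).continuous) (fun ξ _ ↦ ?_) hx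
    change IsCompactOperator (J.op (rankOne ℂ ξ ξ) (rankOne ℂ η η))
    rw [J.op_rankOne]
    exact isCompactOperator_rankOne _ _
  exact mem_of_isCompactOperator_of_rankOne_unit_mem (S := S.comap (J.opL x).toLinearMap)
    (hS.preimage (J.opL x).continuous) (fun η _ ↦ hrankOne η) hy

variable {d : (H →L[ℂ] H) → (H →L[ℂ] H) → ℂ}

theorem IsTensorBounded.exists_eq_map_op {J : OperatorTensor H K} (h : IsTensorBounded J d) :
    ∃ g : (K →L[ℂ] K) →L[ℂ] ℂ, ∀ p q : H →L[ℂ] H, IsOrthoProj p → IsOrthoProj q →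
      HasFiniteRank p → HasFiniteRank q → d p q = g (J.op p q) := by
  obtain ⟨D, -, hD, β, hβ, C, hC⟩ := h
  obtain ⟨g, hg, -⟩ := exists_extension_norm_eq J.compactSpan (β.mkContinuous C hC)
  refine ⟨g, fun p q hp hq hpf hqf ↦ ?_⟩
  have hm : J.op p q ∈ J.compactSpan :=
    Submodule.subset_span ⟨p, q, hpf.isCompactOperator, hqf.isCompactOperator, rfl⟩
  calc d p q = β ⟨J.op p q, hm⟩ := by
        rw [hβ p q hpf.isCompactOperator hqf.isCompactOperator hm, hD p q hp hq]
    _ = g (J.op p q) := (hg ⟨_, hm⟩).symm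

theorem isTensorBounded_of_exists_extendsDF (f : (K →L[ℂ] K) →L[ℂ] ℂ)
    (hf : ∀ p q : H →L[ℂ] H, IsOrthoProj p → IsOrthoProj q → HasFiniteRank p → HasFiniteRank q →
      d p q = f (J.op p q))
    (hD : ∃ D, IsBoundedBilinear D ∧ ExtendsDF D d) : IsTensorBounded J d := by
  obtain ⟨D, ⟨C, hC⟩, hDd⟩ := hD
  refine ⟨D, ⟨C, hC⟩, hDd, (f : (K →L[ℂ] K) →ₗ[ℂ] ℂ) ∘ₗ J.compactSpan.subtype,
    fun x y hx hy _ ↦ ?_, ‖f‖, fun S ↦ f.le_opNorm S⟩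
  have hproj {ξ : H} (hξ : ‖ξ‖ = 1) : IsOrthoProj (rankOne ℂ ξ ξ) :=
    isOrthoProj_iff_isStarProjection.2 (isStarProjection_rankOne_self hξ)
  refine eq_on_compact_of_eq_on_rankOne_unit₂ (Φ := (compL ℂ _ _ _ f) ∘L J.opL)
    (Ψ := D.mkContinuous₂ C hC) (fun ξ η hξ hη ↦ ?_) hx hy
  exact ((hDd _ _ (hproj hξ) (hproj hη)).trans (hf _ _ (hproj hξ) (hproj hη)
    (hasFiniteRank_rankOne _ _) (hasFiniteRank_rankOne _ _))).symm

theorem IsProjectionBimeasure.exists_extendsDF {C : ℝ} (hd : IsProjectionBimeasure d C)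
    (hf : ∃ f : (K →L[ℂ] K) →L[ℂ] ℂ, ∀ p q : H →L[ℂ] H, IsOrthoProj p → IsOrthoProj q →
      HasFiniteRank p → HasFiniteRank q → d p q = f (J.op p q)) :
    ∃ D, IsBoundedBilinear D ∧ ExtendsDF D d := by
  by_cases hH : FiniteDimensional ℂ H
  · obtain ⟨f, hf⟩ := hf
    have hfin (x : H →L[ℂ] H) : HasFiniteRank x :=
      inferInstanceAs (FiniteDimensional ℂ (LinearMap.range (x : H →ₗ[ℂ] H)))
    refine ⟨J.opBilin.compr₂ f, ⟨‖f‖, fun x y ↦ ?_⟩,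
      fun p q hp hq ↦ (hf p q hp hq (hfin p) (hfin q)).symm⟩
    rw [mul_assoc]
    exact f.le_opNorm_of_le (J.norm_op_le x y)
  · obtain ⟨D, hDd, hD⟩ := (J.isGleasonAlgebra hH).exists_bilinearMap hd
    exact ⟨D, ⟨_, hD⟩, fun p q hp hq ↦ hDd p q (isOrthoProj_iff_isStarProjection.1 hp)
      (isOrthoProj_iff_isStarProjection.1 hq)⟩

theorem stmt_2_general {C : ℝ} (hd : IsProjectionBimeasure d C) {ι : Type*}
    (b : HilbertBasis ι ℂ K) :
    IsTensorBounded J d ↔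
      ∃ X : K →L[ℂ] K, IsTraceClass X ∧
        ∀ p q : H →L[ℂ] H, IsOrthoProj p → IsOrthoProj q →
          HasFiniteRank p → HasFiniteRank q →
          d p q = traceAlong b (J.op p q * X) := by
  refine ⟨fun h ↦ ?_, fun ⟨X, hX, hdX⟩ ↦ ?_⟩
  · obtain ⟨g, hg⟩ := h.exists_eq_map_op
    obtain ⟨X, hX, hgX⟩ := exists_isTraceClass_eq_traceAlong_on_compact b g
    refine ⟨X, hX, fun p q hp hq hpf hqf ↦ ?_⟩
    rw [hg p q hp hq hpf hqf,
      hgX _ (J.isCompactOperator_op hpf.isCompactOperator hqf.isCompactOperator)]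
  · obtain ⟨f, hf⟩ := exists_forall_eq_traceAlong_mul b hX
    have hdf (p q : H →L[ℂ] H) (hp : IsOrthoProj p) (hq : IsOrthoProj q) (hpf : HasFiniteRank p)
        (hqf : HasFiniteRank q) : d p q = f (J.op p q) := by
      rw [hf, hdX p q hp hq hpf hqf]
    exact isTensorBounded_of_exists_extendsDF J f hdf (hd.exists_extendsDF J ⟨f, hdf⟩)

end TensorBounded

/-- A bounded decoherence functional `d` on a Hilbert space of
dimension `≠ 2` is tensor bounded iff there is a trace class operator `𝔛` on
`𝔥 ⊗ 𝔥` with `d(p,q) = tr((p ⊗ q) 𝔛)` for all finite rank projections `p, q`. -/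
theorem stmt_2 (hdim : Module.rank ℂ E ≠ 2)
    (d : (E →L[ℂ] E) → (E →L[ℂ] E) → ℂ)
    (hd : IsDecoherenceFunctional d) (hbd : DFBounded d)
    (J : OperatorTensor E G) {ι : Type u} (bG : HilbertBasis ι ℂ G) :
    IsTensorBounded J d ↔
      ∃ X : G →L[ℂ] G, IsTraceClass X ∧
        ∀ p q : E →L[ℂ] E, IsOrthoProj p → IsOrthoProj q →
          HasFiniteRank p → HasFiniteRank q →
          d p q = traceAlong bG (J.op p q * X) := by
  obtain ⟨C, hC⟩ := hbd
  exact stmt_2_general J (hd.isProjectionBimeasure hC) bG
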